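/- Under Condition (★), for every integer h ≥ 2, ∑_{m ∈ S_h(x)} ω(m)² = (κ/ζ_M(h))·x·(log log x)² + (κ(2ℭ₁ + 1)/ζ_M(h))·x·log log x + (κ·ℭ₂/ζ_M(h))·x + O_h(x·log log x/log x) as x → ∞, where the implied constant depends only on h and on the data P, N, κ, θ. -/

import Mathlib

open Filter Topology Asymptotics
open scoped Classical

noncomputable section

/-- The norm on the free abelian monoid `P →₀ ℕ`, extended multiplicatively
from the norm `N` on the prime elements. -/
def Nm {P : Type*} (N : P → ℕ) (m : P →₀ ℕ) : ℕ :=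
  m.prod fun p k => N p ^ k

/-- The number of distinct prime elements generating `m`. -/
def omegaM {P : Type*} (m : P →₀ ℕ) : ℕ := m.support.card

/-- `m` is `h`-free: every multiplicity is at most `h - 1`. -/
def HFree {P : Type*} (h : ℕ) (m : P →₀ ℕ) : Prop := ∀ p, m p ≤ h - 1

/-- `m` is `h`-full: every nonzero multiplicity is at least `h`. -/
def HFull {P : Type*} (h : ℕ) (m : P →₀ ℕ) : Prop := ∀ p, m p = 0 ∨ h ≤ m p

/-- Condition (★): `#{m : N(m) ≤ x} = κ·x + O(x^θ)` with `κ > 0`, `0 ≤ θ < 1`. -/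
def StarCond {P : Type*} (N : P → ℕ) (κ θ : ℝ) : Prop :=
  0 < κ ∧ 0 ≤ θ ∧ θ < 1 ∧
    (fun x : ℝ => (({m : P →₀ ℕ | (Nm N m : ℝ) ≤ x}.ncard : ℝ) - κ * x))
      =O[atTop] fun x : ℝ => x ^ θ

/-- The generalized zeta function `ζ_M(s) = ∑_m N(m)^{-s}`. -/
def zetaM {P : Type*} (N : P → ℕ) (s : ℝ) : ℝ :=
  ∑' m : P →₀ ℕ, 1 / (Nm N m : ℝ) ^ s

/-- The constant `γ_h`. -/
def gammah {P : Type*} (N : P → ℕ) (h : ℕ) : ℝ :=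
  ∏' p : P, (1 + ((N p : ℝ) - (N p : ℝ) ^ (1 / (h : ℝ))) /
    ((N p : ℝ) ^ 2 * ((N p : ℝ) ^ (1 / (h : ℝ)) - 1)))

/-- `A` is the Mertens constant `𝔄` of the prime system:
`𝔄 = lim (∑_{N(p) ≤ x} 1/N(p) − log log x)`. -/
def IsMertens {P : Type*} (N : P → ℕ) (A : ℝ) : Prop :=
  Tendsto (fun x : ℝ =>
      (∑ᶠ p ∈ {p : P | (N p : ℝ) ≤ x}, 1 / (N p : ℝ)) - Real.log (Real.log x))
    atTop (𝓝 A)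

/-- The constant `𝔅 = -π²/6`. -/
def Bconst : ℝ := -(Real.pi ^ 2) / 6

/-- The constant `ℭ₁`, given the Mertens constant `A`. -/
def C1const {P : Type*} (N : P → ℕ) (h : ℕ) (A : ℝ) : ℝ :=
  A - ∑' p : P, ((N p : ℝ) - 1) / ((N p : ℝ) * ((N p : ℝ) ^ h - 1))

/-- The constant `ℭ₂`, given the Mertens constant `A`. -/
def C2const {P : Type*} (N : P → ℕ) (h : ℕ) (A : ℝ) : ℝ :=
  C1const N h A ^ 2 + C1const N h A + Bconst -
    ∑' p : P, (((N p : ℝ) ^ (h - 1) - 1) / ((N p : ℝ) ^ h - 1)) ^ 2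

/-- The convergent series `𝔏_h(r)`. -/
def LhSum {P : Type*} (N : P → ℕ) (h : ℕ) (r : ℝ) : ℝ :=
  ∑' p : P, 1 / ((N p : ℝ) ^ (r / (h : ℝ) - 1) *
    ((N p : ℝ) - (N p : ℝ) ^ (1 - 1 / (h : ℝ)) + 1))

/-- The constant `𝔇₁`, given the Mertens constant `A`. -/
def D1const {P : Type*} (N : P → ℕ) (h : ℕ) (A : ℝ) : ℝ :=
  A - Real.log (h : ℝ) + LhSum N h ((h : ℝ) + 1) - LhSum N h (2 * (h : ℝ))

/-- The constant `𝔇₂`, given the Mertens constant `A`. -/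
def D2const {P : Type*} (N : P → ℕ) (h : ℕ) (A : ℝ) : ℝ :=
  D1const N h A ^ 2 + D1const N h A + Bconst -
    ∑' p : P, (1 / ((N p : ℝ) - (N p : ℝ) ^ (1 - 1 / (h : ℝ)) + 1)) ^ 2

/-- The error term `R_{S_h}(x)` for `h`-free counts. -/
def RSfree (h : ℕ) (θ : ℝ) (x : ℝ) : ℝ :=
  if 1 / (h : ℝ) < θ then x ^ θ
  else if 1 / (h : ℝ) = θ then x ^ (1 / (h : ℝ)) * Real.log x
  else x ^ (1 / (h : ℝ))

/-- The error term `R_{N_h}(x)` for `h`-full counts. -/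
def RNfull (h : ℕ) (θ : ℝ) (x : ℝ) : ℝ :=
  if (h : ℝ) / ((h : ℝ) + 1) < θ then x ^ (θ / (h : ℝ))
  else if ∃ i : ℕ, 1 ≤ i ∧ i ≤ h - 1 ∧ θ = (h : ℝ) / ((h : ℝ) + (i : ℝ)) then
    x ^ (1 / ((h : ℝ) + 1)) * Real.log x
  else x ^ (1 / ((h : ℝ) + 1))

/-!
Squaring `ω(m) = ∑ 1`, over the primes `p` dividing `m`, turns the second moment into
`∑_p #{m ∈ S_h(x) : p ∣ m} + ∑_{p ≠ q} #{m ∈ S_h(x) : pq ∣ m}`. Condition (★), sieved prime by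
prime, shows that these counts are `α(p) κ x / ζ_M(h)` and `α(p) α(q) κ x / ζ_M(h)`, where
`α(p) = (N(p)^{h-1} - 1) / (N(p)^h - 1)`, with errors `O((x / N(p))^τ)` and
`O((x / (N(p) N(q)))^τ)` that are uniform in the primes.

The weight `α(p)` differs from `1 / N(p)` by `O(1 / N(p)²)`, so it inherits Mertens' theorems, with
constant `ℭ₁`. (Mertens' first theorem follows from `∑ log N(m)` as for the integers; the Chebyshev
bound it needs comes from `∑ μ(d) log(x / d) I(x / d)`, because (★) expresses `I(y) log y` through
`y ∑ 1 / N(m)` and `I(y)`, which Möbius inversion collapses to single terms.) Hence `∑ α(p)` is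
`log log x + ℭ₁`, and summing `α(p) (log log (x / N(p)) + ℭ₁)` over `p` gives
`∑_{N(p) N(q) ≤ x} α(p) α(q) = (log log x + ℭ₁)² - π² / 6 + O(log log x / log x)`: the `π² / 6` is
`Li₂(1) = -∫₀¹ log(1 - u) du / u`, the limit of `-∑ α(p) log(1 - log N(p) / log x)`. Removing the
diagonal subtracts `∑ α(p)²`.
-/

section PartialSummation

open Real Finset

variable {c : ℕ → ℝ} {C a b : ℝ}

theorem sum_Icc_zero_add_sum_Ioc (g : ℕ → ℝ) {m n : ℕ} (hmn : m ≤ n) :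
    ∑ k ∈ Icc 0 m, g k + ∑ k ∈ Ioc m n, g k = ∑ k ∈ Icc 0 n, g k := by
  rw [← Nat.range_succ_eq_Icc_zero, ← Nat.range_succ_eq_Icc_zero,
    ← Finset.Ico_add_one_add_one_eq_Ioc]
  exact Finset.sum_range_add_sum_Ico g (by lia)

theorem sum_mul_sub_integral_mul_deriv {f f' g g' : ℝ → ℝ} (ha : 0 ≤ a) (hab : a ≤ b)
    (hf : ∀ t ∈ Set.Icc a b, HasDerivAt f (f' t) t) (hf' : ContinuousOn f' (Set.Icc a b))
    (hg : ∀ t ∈ Set.Icc a b, HasDerivAt g (g' t) t) (hg' : ContinuousOn g' (Set.Icc a b)) :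
    ∑ k ∈ Ioc ⌊a⌋₊ ⌊b⌋₊, f k * c k - ∫ t in a..b, f t * g' t
      = f b * (∑ k ∈ Icc 0 ⌊b⌋₊, c k - g b) - f a * (∑ k ∈ Icc 0 ⌊a⌋₊, c k - g a)
        - ∫ t in a..b, f' t * (∑ k ∈ Icc 0 ⌊t⌋₊, c k - g t) := by
  have hderiv : Set.EqOn f' (deriv f) (Set.Icc a b) := fun t ht => (hf t ht).deriv.symm
  have hgc : ContinuousOn g (Set.Icc a b) := fun t ht => (hg t ht).continuousAt.continuousWithinAt
  have hint : MeasureTheory.IntegrableOn f' (Set.Icc a b) := hf'.integrableOn_Icc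
  have hsum : ∑ k ∈ Ioc ⌊a⌋₊ ⌊b⌋₊, f k * c k = f b * ∑ k ∈ Icc 0 ⌊b⌋₊, c k
      - f a * ∑ k ∈ Icc 0 ⌊a⌋₊, c k - ∫ t in a..b, f' t * ∑ k ∈ Icc 0 ⌊t⌋₊, c k := by
    rw [sum_mul_eq_sub_sub_integral_mul c ha hab (fun t ht => (hf t ht).differentiableAt)
      (hint.congr_fun hderiv measurableSet_Icc), intervalIntegral.integral_of_le hab]
    congr 1
    exact MeasureTheory.setIntegral_congr_fun measurableSet_Ioc
      fun t ht => by simp only [hderiv (Set.Ioc_subset_Icc_self ht)]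
  have hIS : IntervalIntegrable (fun t => f' t * ∑ k ∈ Icc 0 ⌊t⌋₊, c k) MeasureTheory.volume a b :=
    (intervalIntegrable_iff_integrableOn_Icc_of_le hab).2 (integrableOn_mul_sum_Icc c ha hint)
  rw [← Set.uIcc_of_le hab] at hf hf' hg hg' hgc
  have hIg : IntervalIntegrable (fun t => f' t * g t) MeasureTheory.volume a b :=
    (hf'.mul hgc).intervalIntegrable
  simp_rw [mul_sub]
  rw [hsum, intervalIntegral.integral_mul_deriv_eq_deriv_mul hf hg hf'.intervalIntegrable
    hg'.intervalIntegrable, intervalIntegral.integral_sub hIS hIg]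
  ring

theorem abs_sum_mul_sub_integral_mul_deriv_le {f f' g g' : ℝ → ℝ} (ha : 0 ≤ a) (hab : a ≤ b)
    (hc : ∀ t ∈ Set.Icc a b, |∑ k ∈ Icc 0 ⌊t⌋₊, c k - g t| ≤ C)
    (hf : ∀ t ∈ Set.Icc a b, HasDerivAt f (f' t) t) (hf' : ContinuousOn f' (Set.Icc a b))
    (hg : ∀ t ∈ Set.Icc a b, HasDerivAt g (g' t) t) (hg' : ContinuousOn g' (Set.Icc a b)) :
    |∑ k ∈ Ioc ⌊a⌋₊ ⌊b⌋₊, f k * c k - ∫ t in a..b, f t * g' t|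
      ≤ C * (|f a| + |f b| + ∫ t in a..b, |f' t|) := by
  have hpoint (s t : ℝ) (ht : t ∈ Set.Icc a b) :
      |s * (∑ k ∈ Icc 0 ⌊t⌋₊, c k - g t)| ≤ C * |s| := by
    rw [abs_mul, mul_comm]
    exact mul_le_mul_of_nonneg_right (hc t ht) (abs_nonneg _)
  have hintegral : |∫ t in a..b, f' t * (∑ k ∈ Icc 0 ⌊t⌋₊, c k - g t)|
      ≤ C * ∫ t in a..b, |f' t| := by
    rw [← intervalIntegral.integral_const_mul, ← Real.norm_eq_abs]
    refine intervalIntegral.norm_integral_le_of_norm_le hab ?_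
      ((ContinuousOn.intervalIntegrable (by rwa [Set.uIcc_of_le hab])).abs.const_mul C)
    filter_upwards with t ht using hpoint _ t (Set.Ioc_subset_Icc_self ht)
  rw [sum_mul_sub_integral_mul_deriv ha hab hf hf' hg hg']
  refine (abs_sub _ _).trans <| (add_le_add_left (abs_sub _ _) _).trans ?_
  linarith [hpoint (f b) b (Set.right_mem_Icc.2 hab), hpoint (f a) a (Set.left_mem_Icc.2 hab)]

theorem integral_comp_log_mul_inv {φ : ℝ → ℝ} (ha : 0 < a) (hab : a ≤ b)
    (hφ : ContinuousOn φ (Set.Icc (log a) (log b))) :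
    ∫ t in a..b, φ (log t) * t⁻¹ = ∫ u in log a..log b, φ u := by
  have hpos : ∀ t ∈ Set.uIcc a b, 0 < t := fun t ht =>
    ha.trans_le (Set.uIcc_of_le hab ▸ ht : t ∈ Set.Icc a b).1
  refine intervalIntegral.integral_comp_mul_deriv' (fun t ht => hasDerivAt_log (hpos t ht).ne')
    (continuousOn_inv₀.mono fun t ht => (hpos t ht).ne') (hφ.mono ?_)
  rintro _ ⟨t, ht, rfl⟩
  rw [Set.uIcc_of_le hab] at ht
  exact ⟨log_le_log ha ht.1, log_le_log (ha.trans_le ht.1) ht.2⟩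

theorem abs_sum_comp_log_mul_sub_integral_le {φ φ' : ℝ → ℝ} (ha : 1 ≤ a) (hab : a ≤ b)
    (hc : ∀ t : ℝ, 1 ≤ t → |∑ k ∈ Icc 0 ⌊t⌋₊, c k - log t| ≤ C)
    (hφ : ∀ u ∈ Set.Icc (log a) (log b), HasDerivAt φ (φ' u) u)
    (hφ' : ContinuousOn φ' (Set.Icc (log a) (log b))) :
    |∑ k ∈ Ioc ⌊a⌋₊ ⌊b⌋₊, φ (log k) * c k - ∫ u in log a..log b, φ u|
      ≤ C * (|φ (log a)| + |φ (log b)| + ∫ u in log a..log b, |φ' u|) := by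
  have ha0 : 0 < a := by linarith
  have hpos : ∀ t ∈ Set.Icc a b, 0 < t := fun t ht => ha0.trans_le ht.1
  have hmaps : Set.MapsTo log (Set.Icc a b) (Set.Icc (log a) (log b)) := fun t ht =>
    ⟨log_le_log ha0 ht.1, log_le_log (hpos t ht) ht.2⟩
  have hlog : ∀ t ∈ Set.Icc a b, HasDerivAt log t⁻¹ t := fun t ht => hasDerivAt_log (hpos t ht).ne'
  have hinv : ContinuousOn (fun t : ℝ => t⁻¹) (Set.Icc a b) :=
    continuousOn_inv₀.mono fun t ht => (hpos t ht).ne'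
  have hφ'_log : ContinuousOn (fun t => φ' (log t)) (Set.Icc a b) :=
    hφ'.comp (continuousOn_log.mono fun t ht => (hpos t ht).ne') hmaps
  have habs : ∫ t in a..b, |φ' (log t) * t⁻¹| = ∫ u in log a..log b, |φ' u| := by
    rw [← integral_comp_log_mul_inv ha0 hab hφ'.abs]
    refine intervalIntegral.integral_congr fun t ht => ?_
    rw [Set.uIcc_of_le hab] at ht
    simp only [abs_mul, abs_of_pos (inv_pos.2 (hpos t ht))]
  have hmain := abs_sum_mul_sub_integral_mul_deriv_le ha0.le hab
    (fun t ht => hc t (ha.trans ht.1)) (fun t ht => (hφ _ (hmaps ht)).comp t (hlog t ht))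
    (hφ'_log.mul hinv) hlog hinv
  simp only [Function.comp_apply] at hmain
  rwa [habs, integral_comp_log_mul_inv ha0 hab
    fun u hu => (hφ u hu).continuousAt.continuousWithinAt] at hmain

theorem abs_sum_comp_log_mul_sub_integral_le_of_deriv_nonneg {φ φ' : ℝ → ℝ} (ha : 1 ≤ a)
    (hab : a ≤ b) (hc : ∀ t : ℝ, 1 ≤ t → |∑ k ∈ Icc 0 ⌊t⌋₊, c k - log t| ≤ C)
    (hφ : ∀ u ∈ Set.Icc (log a) (log b), HasDerivAt φ (φ' u) u)
    (hφ' : ContinuousOn φ' (Set.Icc (log a) (log b)))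
    (hnonneg : ∀ u ∈ Set.Icc (log a) (log b), 0 ≤ φ u)
    (hderiv : ∀ u ∈ Set.Icc (log a) (log b), 0 ≤ φ' u) :
    |∑ k ∈ Ioc ⌊a⌋₊ ⌊b⌋₊, φ (log k) * c k - ∫ u in log a..log b, φ u| ≤ 2 * C * φ (log b) := by
  have hmain := abs_sum_comp_log_mul_sub_integral_le ha hab hc hφ hφ'
  have hlog : log a ≤ log b := log_le_log (by linarith) hab
  rw [abs_of_nonneg (hnonneg _ (Set.left_mem_Icc.2 hlog)),
    abs_of_nonneg (hnonneg _ (Set.right_mem_Icc.2 hlog))] at hmain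
  rw [← Set.uIcc_of_le hlog] at hφ hφ' hderiv
  rw [intervalIntegral.integral_congr fun u hu => abs_of_nonneg (hderiv u hu),
    intervalIntegral.integral_eq_sub_of_hasDerivAt hφ hφ'.intervalIntegrable] at hmain
  linarith

theorem abs_sum_comp_log_mul_sub_integral_le_of_deriv_nonpos {φ φ' : ℝ → ℝ} (ha : 1 ≤ a)
    (hab : a ≤ b) (hc : ∀ t : ℝ, 1 ≤ t → |∑ k ∈ Icc 0 ⌊t⌋₊, c k - log t| ≤ C)
    (hφ : ∀ u ∈ Set.Icc (log a) (log b), HasDerivAt φ (φ' u) u)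
    (hφ' : ContinuousOn φ' (Set.Icc (log a) (log b)))
    (hnonneg : ∀ u ∈ Set.Icc (log a) (log b), 0 ≤ φ u)
    (hderiv : ∀ u ∈ Set.Icc (log a) (log b), φ' u ≤ 0) :
    |∑ k ∈ Ioc ⌊a⌋₊ ⌊b⌋₊, φ (log k) * c k - ∫ u in log a..log b, φ u| ≤ 2 * C * φ (log a) := by
  have hmain := abs_sum_comp_log_mul_sub_integral_le ha hab hc hφ hφ'
  have hlog : log a ≤ log b := log_le_log (by linarith) hab
  rw [abs_of_nonneg (hnonneg _ (Set.left_mem_Icc.2 hlog)),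
    abs_of_nonneg (hnonneg _ (Set.right_mem_Icc.2 hlog))] at hmain
  rw [← Set.uIcc_of_le hlog] at hφ hφ' hderiv
  rw [intervalIntegral.integral_congr fun u hu => abs_of_nonpos (hderiv u hu),
    intervalIntegral.integral_neg,
    intervalIntegral.integral_eq_sub_of_hasDerivAt hφ hφ'.intervalIntegrable] at hmain
  linarith

end PartialSummation

section LogLog

open Real

theorem tendsto_log_log_atTop : Tendsto (fun x : ℝ => log (log x)) atTop atTop :=
  tendsto_log_atTop.comp tendsto_log_atTop

theorem isBigO_const_log_log (a : ℝ) : (fun _ : ℝ => a) =O[atTop] fun x : ℝ => log (log x) :=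
  (isLittleO_const_left.2
    (Or.inr (tendsto_norm_atTop_atTop.comp tendsto_log_log_atTop))).isBigO

end LogLog

/-- A nonnegative weight on `ℕ`, vanishing at `0` and `1`, which obeys Mertens' first theorem with
error at most `C` and Mertens' second theorem with constant `M`. The model is the weight `1 / p` on
the primes. -/
structure MertensWeight (b : ℕ → ℝ) (C M : ℝ) : Prop where
  nonneg : ∀ n, 0 ≤ b n
  map_zero : b 0 = 0
  map_one : b 1 = 0
  abs_sum_mul_log_sub_log_le : ∀ t : ℝ, 1 ≤ t →
    |∑ k ∈ Finset.Icc 0 ⌊t⌋₊, b k * Real.log k - Real.log t| ≤ C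
  tendsto_sum_sub_log_log : Tendsto
    (fun x : ℝ => ∑ k ∈ Finset.Icc 0 ⌊x⌋₊, b k - Real.log (Real.log x)) atTop (𝓝 M)

namespace MertensWeight

open Real Finset

variable {b : ℕ → ℝ} {C M : ℝ}

theorem sum_Icc_zero_mul (H : MertensWeight b C M) (g : ℕ → ℝ) {n : ℕ} (hn : 1 ≤ n) :
    ∑ k ∈ Icc 0 n, b k * g k = ∑ k ∈ Ioc 1 n, b k * g k := by
  rw [← sum_Icc_zero_add_sum_Ioc _ hn, show Icc 0 1 = {0, 1} by decide]
  simp [H.map_zero, H.map_one]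

theorem abs_sum_Ioc_sub_log_log_le (H : MertensWeight b C M) {x y : ℝ} (hx : 1 < x) (hxy : x ≤ y) :
    |∑ k ∈ Ioc ⌊x⌋₊ ⌊y⌋₊, b k - (log (log y) - log (log x))| ≤ 2 * C / log x := by
  have hpos : 0 < log x := log_pos hx
  have hupos : ∀ u ∈ Set.Icc (log x) (log y), 0 < u := fun u hu => hpos.trans_le hu.1
  have habel := abs_sum_comp_log_mul_sub_integral_le_of_deriv_nonpos (φ := fun u => u⁻¹)
    (φ' := fun u => -(u ^ 2)⁻¹) hx.le hxy H.abs_sum_mul_log_sub_log_le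
    (fun u hu => hasDerivAt_inv (hupos u hu).ne')
    ((continuousOn_pow 2).inv₀ fun u hu => (pow_pos (hupos u hu) 2).ne').neg
    (fun u hu => (inv_pos.2 (hupos u hu)).le)
    (fun u hu => neg_nonpos.2 (inv_nonneg.2 (sq_nonneg u)))
  have hcancel : ∀ k ∈ Ioc ⌊x⌋₊ ⌊y⌋₊, (log k)⁻¹ * (b k * log k) = b k := fun k hk => by
    have hk1 : (1 : ℝ) < k := hx.trans (Nat.lt_of_floor_lt (mem_Ioc.1 hk).1)
    field_simp [(log_pos hk1).ne']
  have hlog : log x ≤ log y := log_le_log (by linarith) hxy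
  rwa [sum_congr rfl hcancel, integral_inv_of_pos hpos (hpos.trans_le hlog),
    log_div (hpos.trans_le hlog).ne' hpos.ne', ← div_eq_mul_inv] at habel

theorem abs_sum_sub_log_log_sub_le (H : MertensWeight b C M) {x : ℝ} (hx : 1 < x) :
    |∑ k ∈ Icc 0 ⌊x⌋₊, b k - log (log x) - M| ≤ 2 * C / log x := by
  have hlim := (H.tendsto_sum_sub_log_log.sub_const
    (∑ k ∈ Icc 0 ⌊x⌋₊, b k - log (log x))).abs
  rw [abs_sub_comm]
  refine le_of_tendsto hlim ?_
  filter_upwards [eventually_ge_atTop x] with y hy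
  rw [← sum_Icc_zero_add_sum_Ioc b (Nat.floor_le_floor hy)]
  refine (congrArg abs ?_).trans_le (H.abs_sum_Ioc_sub_log_log_le hx hy)
  ring

theorem isBigO_sum_log_log (H : MertensWeight b C M) :
    (fun x : ℝ => ∑ k ∈ Icc 0 ⌊x⌋₊, b k) =O[atTop] fun x => log (log x) := by
  have hbounded : (fun x : ℝ => ∑ k ∈ Icc 0 ⌊x⌋₊, b k - log (log x)) =O[atTop]
      fun x => log (log x) :=
    (H.tendsto_sum_sub_log_log.isBigO_one ℝ).trans (isBigO_const_log_log 1)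
  simpa using hbounded.add (isBigO_refl _ _)

theorem abs_sum_mul_log_mul_sub_integral_le (H : MertensWeight b C M) {φ φ' : ℝ → ℝ} {y : ℝ}
    (hy : 1 ≤ y) (hφ : ∀ u ∈ Set.Icc 0 (log y), HasDerivAt φ (φ' u) u)
    (hφ' : ContinuousOn φ' (Set.Icc 0 (log y))) (hnonneg : ∀ u ∈ Set.Icc 0 (log y), 0 ≤ φ u)
    (hderiv : ∀ u ∈ Set.Icc 0 (log y), 0 ≤ φ' u) :
    |∑ n ∈ Icc 0 ⌊y⌋₊, b n * (log n * φ (log n)) - ∫ u in 0..log y, φ u|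
      ≤ 2 * C * φ (log y) := by
  have habel := abs_sum_comp_log_mul_sub_integral_le_of_deriv_nonneg (φ := φ) (φ' := φ') le_rfl hy
    H.abs_sum_mul_log_sub_log_le (by rwa [log_one]) (by rwa [log_one]) (by rwa [log_one])
    (by rwa [log_one])
  rw [H.sum_Icc_zero_mul _ ((Nat.one_le_floor_iff _).mpr hy)]
  simpa only [Nat.floor_one, log_one, mul_comm, mul_left_comm] using habel

theorem abs_sum_mul_log_pow_succ_sub_le (H : MertensWeight b C M) {y : ℝ} (hy : 1 ≤ y) (k : ℕ) :
    |∑ n ∈ Icc 0 ⌊y⌋₊, b n * log n ^ (k + 1) - log y ^ (k + 1) / (k + 1)|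
      ≤ 2 * C * log y ^ k := by
  have habel := H.abs_sum_mul_log_mul_sub_integral_le hy (fun u _ => hasDerivAt_pow k u)
    (by fun_prop) (fun u hu => pow_nonneg hu.1 k)
    (fun u hu => mul_nonneg k.cast_nonneg (pow_nonneg hu.1 _))
  simpa [integral_pow, pow_succ'] using habel

theorem sum_mul_log_mul_rpow_le (H : MertensWeight b C M) {σ y : ℝ} (hσ : 0 < σ) (hy : 1 ≤ y) :
    ∑ n ∈ Icc 0 ⌊y⌋₊, b n * (log n * (n : ℝ) ^ σ) ≤ (1 / σ + 2 * C) * y ^ σ := by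
  have hy0 : 0 < y := by linarith
  have hderiv : ∀ u, HasDerivAt (fun u => exp (u * σ)) (exp (u * σ) * σ) u := fun u =>
    (hasDerivAt_mul_const σ).exp
  have habel := H.abs_sum_mul_log_mul_sub_integral_le hy (fun u _ => hderiv u) (by fun_prop)
    (fun u _ => (exp_pos _).le) (fun u _ => by positivity)
  have hintegral : ∫ u in 0..log y, exp (u * σ) = y ^ σ / σ - 1 / σ := by
    rw [intervalIntegral.integral_comp_mul_right _ hσ.ne', integral_exp, ← rpow_def_of_pos hy0]
    simp [field]
  have hterm : ∀ n ∈ Icc 0 ⌊y⌋₊,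
      b n * (log n * exp (log n * σ)) = b n * (log n * (n : ℝ) ^ σ) := fun n _ => by
    rcases n.eq_zero_or_pos with rfl | hn
    · simp
    · rw [rpow_def_of_pos (by exact_mod_cast hn)]
  rw [sum_congr rfl hterm, hintegral, ← rpow_def_of_pos hy0] at habel
  linarith [(abs_le.1 habel).2, one_div_pos.2 hσ, show (1 / σ + 2 * C) * y ^ σ
    = y ^ σ / σ + 2 * C * y ^ σ by ring]

end MertensWeight

section HalfSums

open Real Finset

theorem log_two_le_log_sub_log {x : ℝ} (hx : 2 ≤ x) {n : ℕ} (hn : n ∈ Icc 0 ⌊x / 2⌋₊) :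
    log 2 ≤ log x - log n := by
  rcases n.eq_zero_or_pos with rfl | hpos
  · simpa using log_le_log two_pos hx
  · have hn2 : (n : ℝ) ≤ x / 2 := (Nat.le_floor_iff (by linarith)).1 (mem_Icc.1 hn).2
    have hlog := log_le_log (by exact_mod_cast hpos) hn2
    rw [log_div (by linarith) two_ne_zero] at hlog
    linarith

theorem Icc_floor_half_subset {x : ℝ} (hx : 0 ≤ x) : Icc 0 ⌊x / 2⌋₊ ⊆ Icc 0 ⌊x⌋₊ :=
  Icc_subset_Icc_right (Nat.floor_le_floor (by linarith))

end HalfSums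

namespace MertensWeight

open Real Finset

variable {b : ℕ → ℝ} {C M : ℝ}

theorem abs_sum_mul_log_div_log_sub_log_sub_le (H : MertensWeight b C M) {x : ℝ} (hx : 2 ≤ x) :
    |∑ n ∈ Icc 0 ⌊x / 2⌋₊, b n * (log n * (log x - log n)⁻¹) - (log (log x) - log (log 2))|
      ≤ 2 * C * (log 2)⁻¹ := by
  have hlog2 : 0 < log 2 := log_pos one_lt_two
  have hhalf : log (x / 2) = log x - log 2 := log_div (by linarith) two_ne_zero
  have hpos : ∀ u ∈ Set.Icc 0 (log (x / 2)), 0 < log x - u := fun u hu => by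
    linarith [hu.2]
  have hlogx : 0 < log x := log_pos (by linarith)
  have habel := H.abs_sum_mul_log_mul_sub_integral_le (y := x / 2) (by linarith)
    (φ := fun u => (log x - u)⁻¹) (φ' := fun u => -(-1) / (log x - u) ^ 2)
    (fun u hu => ((hasDerivAt_id u).const_sub _).inv (hpos u hu).ne')
    (continuousOn_const.div (by fun_prop) fun u hu => (pow_pos (hpos u hu) 2).ne')
    (fun u hu => (inv_pos.2 (hpos u hu)).le) (fun u _ => by positivity)
  have hintegral : ∫ u in 0..log (x / 2), (log x - u)⁻¹ = log (log x) - log (log 2) := by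
    rw [intervalIntegral.integral_comp_sub_left (fun u => u⁻¹), sub_zero, hhalf, sub_sub_cancel,
      integral_inv_of_pos hlog2 hlogx, log_div hlogx.ne' hlog2.ne']
  rw [hintegral] at habel
  simpa only [hhalf, sub_sub_cancel] using habel

theorem isBigO_sum_mul_inv_log_sub_log (H : MertensWeight b C M) :
    (fun x : ℝ => ∑ n ∈ Icc 0 ⌊x / 2⌋₊, b n * (log x - log n)⁻¹) =O[atTop]
      fun x => log (log x) / log x := by
  have hfst : (fun x : ℝ => ∑ n ∈ Icc 0 ⌊x / 2⌋₊, b n) =O[atTop] fun x => log (log x) := by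
    refine .trans (.of_bound 1 ?_) H.isBigO_sum_log_log
    filter_upwards [eventually_ge_atTop 0] with x hx
    rw [one_mul, norm_of_nonneg (sum_nonneg fun n _ => H.nonneg n),
      norm_of_nonneg (sum_nonneg fun n _ => H.nonneg n)]
    exact sum_le_sum_of_subset_of_nonneg (Icc_floor_half_subset hx) fun n _ _ => H.nonneg n
  have hsnd : (fun x : ℝ => ∑ n ∈ Icc 0 ⌊x / 2⌋₊, b n * (log n * (log x - log n)⁻¹))
      =O[atTop] fun x => log (log x) := by
    have hdiff : (fun x : ℝ => ∑ n ∈ Icc 0 ⌊x / 2⌋₊, b n * (log n * (log x - log n)⁻¹)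
        - (log (log x) - log (log 2))) =O[atTop] fun x => log (log x) := by
      refine .trans (.of_bound (2 * C * (log 2)⁻¹) ?_) (isBigO_const_log_log 1)
      filter_upwards [eventually_ge_atTop 2] with x hx
      simpa using H.abs_sum_mul_log_div_log_sub_log_sub_le hx
    simpa using hdiff.add ((isBigO_refl _ _).sub (isBigO_const_log_log (log (log 2))))
  refine ((hfst.add hsnd).mul (isBigO_refl (fun x => (log x)⁻¹) _)).congr' ?_ ?_
  · filter_upwards [eventually_ge_atTop 2] with x hx
    have hlogx : 0 < log x := log_pos (by linarith)
    rw [← sum_add_distrib, sum_mul]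
    refine sum_congr rfl fun n hn => ?_
    have hpos : 0 < log x - log n := (log_pos one_lt_two).trans_le (log_two_le_log_sub_log hx hn)
    field_simp
    ring
  · exact .of_eq (funext fun x => (div_eq_mul_inv _ _).symm)

theorem log_le_mul_log_mul_rpow {σ : ℝ} (hσ : 0 < σ) {x t : ℝ} (ht : 2 ≤ t) (htx : t ≤ x) :
    log x ≤ (1 + 1 / (log 2 * σ)) * (log t * (x / t) ^ σ) := by
  have ht0 : 0 < t := by linarith
  have hlog2 : 0 < log 2 := log_pos one_lt_two
  have hlogt : 1 ≤ log t / log 2 := (one_le_div hlog2).2 (log_le_log two_pos ht)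
  have hone : 1 ≤ (x / t) ^ σ := one_le_rpow ((one_le_div ht0).2 htx) hσ.le
  calc log x = log t + log (x / t) := by rw [log_div (by linarith) ht0.ne']; ring
    _ ≤ log t * (x / t) ^ σ + (log t / log 2) * ((x / t) ^ σ / σ) := by
        gcongr ?_ + ?_
        · exact le_mul_of_one_le_right (log_nonneg (by linarith)) hone
        · exact (log_le_rpow_div (div_nonneg (ht0.le.trans htx) ht0.le) hσ).trans
            (le_mul_of_one_le_left (by positivity) hlogt)
    _ = _ := by field_simp

theorem exists_sum_mul_rpow_le (H : MertensWeight b C M) {σ : ℝ} (hσ : 0 < σ) :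
    ∃ K, ∀ x : ℝ, 2 ≤ x → ∑ n ∈ Icc 0 ⌊x⌋₊, b n * (n : ℝ) ^ σ ≤ K * (x ^ σ / log x) := by
  set K₁ := 1 + 1 / (log 2 * (σ / 2))
  have hK₁ : 0 < K₁ := by positivity
  refine ⟨K₁ * (1 / (σ / 2) + 2 * C), fun x hx => ?_⟩
  have hx0 : 0 < x := by linarith
  have hlogx : 0 < log x := log_pos (by linarith)
  have hhalves (t : ℝ) (ht : 0 < t) : t ^ σ = t ^ (σ / 2) * t ^ (σ / 2) := by
    rw [← rpow_add ht, add_halves]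
  have hterm : ∀ n ∈ Icc 0 ⌊x⌋₊, b n * (n : ℝ) ^ σ ≤
      K₁ * x ^ (σ / 2) / log x * (b n * (log n * (n : ℝ) ^ (σ / 2))) := fun n hn => by
    rcases Nat.lt_or_ge n 2 with h | h
    · interval_cases n <;> simp [H.map_zero, H.map_one]
    have hn2 : (2 : ℝ) ≤ n := by exact_mod_cast h
    have hn0 : (0 : ℝ) < n := by linarith
    have hlog := log_le_mul_log_mul_rpow (half_pos hσ) hn2
      ((Nat.le_floor_iff hx0.le).1 (mem_Icc.1 hn).2)
    rw [div_rpow hx0.le hn0.le] at hlog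
    calc b n * (n : ℝ) ^ σ = b n * (n : ℝ) ^ σ / log x * log x := by field_simp
      _ ≤ b n * (n : ℝ) ^ σ / log x * (K₁ * (log n * (x ^ (σ / 2) / (n : ℝ) ^ (σ / 2)))) := by
          have := H.nonneg n
          gcongr
      _ = _ := by rw [hhalves n hn0]; field_simp
  calc _ ≤ K₁ * x ^ (σ / 2) / log x * ∑ n ∈ Icc 0 ⌊x⌋₊, b n * (log n * (n : ℝ) ^ (σ / 2)) := by
        rw [mul_sum]; exact sum_le_sum hterm
    _ ≤ K₁ * x ^ (σ / 2) / log x * ((1 / (σ / 2) + 2 * C) * x ^ (σ / 2)) := by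
        gcongr
        exact H.sum_mul_log_mul_rpow_le (half_pos hσ) (by linarith)
    _ = _ := by rw [hhalves x hx0]; ring

theorem isBigO_sum_mul_rpow_mul_sum_mul_rpow (H : MertensWeight b C M) {σ : ℝ} (hσ : 0 < σ) :
    (fun x : ℝ => ∑ n ∈ Icc 0 ⌊x / 2⌋₊, b n * (n : ℝ) ^ σ *
        ∑ m ∈ Icc 0 ⌊x / n⌋₊, b m * (m : ℝ) ^ σ) =O[atTop]
      fun x => x ^ σ * (log (log x) / log x) := by
  obtain ⟨K, hK⟩ := H.exists_sum_mul_rpow_le hσ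
  refine .trans (.of_bound K ?_) ((isBigO_refl _ _).mul H.isBigO_sum_mul_inv_log_sub_log)
  filter_upwards [eventually_ge_atTop 2] with x hx
  have hx0 : 0 < x := by linarith
  have hinner (n : ℕ) : 0 ≤ ∑ m ∈ Icc 0 ⌊x / n⌋₊, b m * (m : ℝ) ^ σ :=
    sum_nonneg fun m _ => mul_nonneg (H.nonneg m) (by positivity)
  have hterm : ∀ n ∈ Icc 0 ⌊x / 2⌋₊, b n * (n : ℝ) ^ σ * ∑ m ∈ Icc 0 ⌊x / n⌋₊, b m * (m : ℝ) ^ σ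
      ≤ K * x ^ σ * (b n * (log x - log n)⁻¹) := fun n hn => by
    rcases n.eq_zero_or_pos with rfl | hpos
    · simp [H.map_zero]
    have hn0 : (0 : ℝ) < n := by exact_mod_cast hpos
    have hn2 : (n : ℝ) ≤ x / 2 := (Nat.le_floor_iff (by linarith)).1 (mem_Icc.1 hn).2
    calc _ ≤ b n * (n : ℝ) ^ σ * (K * ((x / n) ^ σ / log (x / n))) := by
          have := H.nonneg n
          gcongr
          exact hK _ (by rw [le_div_iff₀ hn0]; linarith)
      _ = _ := by
          rw [log_div hx0.ne' hn0.ne', div_rpow hx0.le hn0.le]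
          field_simp
  have hsum := sum_le_sum hterm
  rw [← mul_sum, mul_assoc] at hsum
  rw [norm_of_nonneg (sum_nonneg fun n _ => mul_nonneg (mul_nonneg (H.nonneg n) (by positivity))
    (hinner n)), norm_of_nonneg (mul_nonneg (by positivity) (sum_nonneg fun n hn =>
      mul_nonneg (H.nonneg n) (inv_nonneg.2 ((log_nonneg one_le_two).trans
        (log_two_le_log_sub_log hx hn)))))]
  exact hsum

end MertensWeight

section Dilogarithm

open Real

theorem summable_pow_succ_div_succ_sq {v : ℝ} (hv0 : 0 ≤ v) (hv1 : v ≤ 1) :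
    Summable fun k : ℕ => v ^ (k + 1) / ((k : ℝ) + 1) ^ 2 := by
  have hzeta : Summable fun k : ℕ => 1 / ((k : ℝ) + 1) ^ 2 := by
    simpa using (summable_nat_add_iff 1).2 hasSum_zeta_two.summable
  refine .of_nonneg_of_le (fun k => by positivity) (fun k => ?_) hzeta
  gcongr
  exact pow_le_one₀ hv0 hv1

theorem hasSum_one_div_succ_sub_one_div_add_two :
    HasSum (fun k : ℕ => 1 / ((k : ℝ) + 1) - 1 / ((k : ℝ) + 2)) 1 := by
  have hpartial (n : ℕ) :
      ∑ k ∈ Finset.range n, (1 / ((k : ℝ) + 1) - 1 / ((k : ℝ) + 2)) = 1 - 1 / ((n : ℝ) + 1) := by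
    induction n with
    | zero => simp
    | succ n ih => rw [Finset.sum_range_succ, ih]; push_cast; ring
  rw [hasSum_iff_tendsto_nat_of_nonneg fun k => sub_nonneg.2 (by gcongr; norm_num)]
  simp_rw [hpartial]
  simpa using tendsto_one_div_add_atTop_nhds_zero_nat.const_sub (1 : ℝ)

theorem hasSum_pow_succ_div_add_two {v : ℝ} (hv0 : 0 < v) (hv1 : v < 1) :
    HasSum (fun k : ℕ => v ^ (k + 1) / ((k : ℝ) + 2)) ((-log (1 - v) - v) / v) := by
  have hlog := hasSum_pow_div_log_of_abs_lt_one (abs_lt.2 ⟨by linarith, hv1⟩)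
  have hshift := ((hasSum_nat_add_iff' 1).2 hlog).div_const v
  have hterm (k : ℕ) :
      v ^ (k + 1 + 1) / (((k + 1 : ℕ) : ℝ) + 1) / v = v ^ (k + 1) / ((k : ℝ) + 2) := by
    push_cast
    field_simp
    ring
  simp_rw [hterm] at hshift
  simpa using hshift

-- Each term is compared with twice the telescoping one: `1 / (k + 1) ^ 2 ≤ 2 / ((k + 1) (k + 2))`.
theorem abs_pi_sq_div_six_sub_tsum_le {v : ℝ} (hv0 : 0 < v) (hv1 : v < 1) :
    |π ^ 2 / 6 - ∑' k : ℕ, v ^ (k + 1) / ((k : ℝ) + 1) ^ 2|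
      ≤ 2 * -log (1 - v) * (1 - v) / v := by
  have hzeta : HasSum (fun k : ℕ => 1 / ((k : ℝ) + 1) ^ 2) (π ^ 2 / 6) := by
    simpa using (hasSum_nat_add_iff' 1).2 hasSum_zeta_two
  have hdiff := hzeta.sub (summable_pow_succ_div_succ_sq hv0.le hv1.le).hasSum
  have hpow (k : ℕ) : 0 ≤ 1 - v ^ (k + 1) := sub_nonneg.2 (pow_le_one₀ hv0.le hv1.le)
  have hfactor (k : ℕ) : 1 / ((k : ℝ) + 1) ^ 2 - v ^ (k + 1) / ((k : ℝ) + 1) ^ 2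
      = (1 - v ^ (k + 1)) * (1 / ((k : ℝ) + 1) ^ 2) := by ring
  have htelescope := (hasSum_one_div_succ_sub_one_div_add_two.sub
    ((hasSum_pow_div_log_of_abs_lt_one (abs_lt.2 ⟨by linarith, hv1⟩)).sub
      (hasSum_pow_succ_div_add_two hv0 hv1))).mul_left 2
  rw [abs_of_nonneg (hdiff.nonneg fun k => by
    rw [hfactor]; exact mul_nonneg (hpow k) (by positivity))]
  refine (hasSum_le (fun k => ?_) hdiff htelescope).trans_eq (by field_simp; ring)
  calc _ = (1 - v ^ (k + 1)) * (1 / ((k : ℝ) + 1) ^ 2) := hfactor k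
    _ ≤ (1 - v ^ (k + 1)) * (2 / (((k : ℝ) + 1) * ((k : ℝ) + 2))) := by
        refine mul_le_mul_of_nonneg_left ?_ (hpow k)
        rw [div_le_div_iff₀ (by positivity) (by positivity)]
        nlinarith [(Nat.cast_nonneg k : (0 : ℝ) ≤ k)]
    _ = _ := by field_simp; ring

end Dilogarithm

section LogHalf

open Real

theorem abs_log_one_sub_le {u : ℝ} (hu0 : 0 ≤ u) (hu : u ≤ 1 / 2) : |log (1 - u)| ≤ 2 * u := by
  have hpos : 0 < 1 - u := by linarith
  have hinv : (1 - u)⁻¹ ≤ 1 + 2 * u := by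
    rw [inv_le_iff_one_le_mul₀ hpos]
    nlinarith
  rw [abs_of_nonpos (log_nonpos hpos.le (by linarith))]
  linarith [one_sub_inv_le_log_of_pos hpos]

theorem two_mul_log_two_le_log {x : ℝ} (hx : 4 ≤ x) : 2 * log 2 ≤ log x := by
  rw [← Nat.cast_ofNat (R := ℝ) (n := 2), ← log_pow]
  exact log_le_log (by norm_num) (by norm_num; linarith)

theorem log_half {x : ℝ} (hx : x ≠ 0) : log (x / 2) = log x - log 2 :=
  log_div hx two_ne_zero

theorem isBigO_inv_log_half :
    (fun x : ℝ => (log (x / 2))⁻¹) =O[atTop] fun x => (log x)⁻¹ := by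
  refine .of_bound 2 ?_
  filter_upwards [eventually_ge_atTop 4] with x hx
  have hlog := two_mul_log_two_le_log hx
  have hlog2 : 0 < log 2 := log_pos one_lt_two
  rw [log_half (by linarith), norm_inv, norm_inv, norm_of_nonneg (by linarith),
    norm_of_nonneg (by linarith), inv_eq_one_div, ← div_eq_mul_inv, div_le_div_iff₀ (by linarith)
    (by linarith)]
  linarith

theorem isBigO_log_log_half_sub_log_log :
    (fun x : ℝ => log (log (x / 2)) - log (log x)) =O[atTop] fun x => (log x)⁻¹ := by
  refine .of_bound (2 * log 2) ?_
  filter_upwards [eventually_ge_atTop 4] with x hx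
  have hlog := two_mul_log_two_le_log hx
  have hlog2 : 0 < log 2 := log_pos one_lt_two
  have hlogx : 0 < log x := by linarith
  have hratio : log (log (x / 2)) - log (log x) = log (1 - log 2 / log x) := by
    rw [log_half (by linarith), ← log_div (by linarith) hlogx.ne', sub_div, div_self hlogx.ne']
  rw [hratio, norm_of_nonneg (inv_nonneg.2 hlogx.le), mul_assoc, ← div_eq_mul_inv]
  refine abs_log_one_sub_le (by positivity) ?_
  rw [div_le_iff₀ hlogx]
  linarith

end LogHalf

namespace MertensWeight

open Real Finset

variable {b : ℕ → ℝ} {C M : ℝ}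

theorem abs_sum_mul_log_div_pow_sub_le (H : MertensWeight b C M) {y X : ℝ} (hy : 1 < y)
    (hX : 0 < X) (k : ℕ) :
    |∑ n ∈ Icc 0 ⌊y⌋₊, b n * ((log n / X) ^ (k + 1) / ((k : ℝ) + 1))
        - (log y / X) ^ (k + 1) / ((k : ℝ) + 1) ^ 2|
      ≤ 2 * C / log y * ((log y / X) ^ (k + 1) / ((k : ℝ) + 1)) := by
  have hlogy : 0 < log y := log_pos hy
  have hscale : ∑ n ∈ Icc 0 ⌊y⌋₊, b n * ((log n / X) ^ (k + 1) / ((k : ℝ) + 1))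
        - (log y / X) ^ (k + 1) / ((k : ℝ) + 1) ^ 2
      = 1 / (X ^ (k + 1) * ((k : ℝ) + 1)) * (∑ n ∈ Icc 0 ⌊y⌋₊, b n * log n ^ (k + 1)
        - log y ^ (k + 1) / (k + 1)) := by
    rw [mul_sub, mul_sum]
    congr 1
    · exact sum_congr rfl fun n _ => by rw [div_pow]; field_simp
    · rw [div_pow]; field_simp
  rw [hscale, abs_mul, abs_of_nonneg (by positivity)]
  calc _ ≤ 1 / (X ^ (k + 1) * ((k : ℝ) + 1)) * (2 * C * log y ^ k) := by
        gcongr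
        exact H.abs_sum_mul_log_pow_succ_sub_le hy.le k
    _ = _ := by rw [div_pow]; field_simp; ring

theorem abs_sum_mul_log_one_sub_add_tsum_le (H : MertensWeight b C M) {y X : ℝ} (hy : 1 < y)
    (hX : log y < X) :
    |∑ n ∈ Icc 0 ⌊y⌋₊, b n * log (1 - log n / X)
        + ∑' k : ℕ, (log y / X) ^ (k + 1) / ((k : ℝ) + 1) ^ 2|
      ≤ 2 * C / log y * -log (1 - log y / X) := by
  have hlogy : 0 < log y := log_pos hy
  have hX0 : 0 < X := hlogy.trans hX
  have hratio : log y / X < 1 := (div_lt_one hX0).2 hX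
  have hlogn : ∀ n ∈ Icc 0 ⌊y⌋₊, |log n / X| < 1 := fun n hn => by
    have hn0 : 0 ≤ log n := log_natCast_nonneg n
    rw [abs_of_nonneg (by positivity), div_lt_one hX0]
    refine lt_of_le_of_lt ?_ hX
    rcases n.eq_zero_or_pos with rfl | hpos
    · simpa using hlogy.le
    · exact log_le_log (by exact_mod_cast hpos)
        ((Nat.le_floor_iff (by linarith)).1 (mem_Icc.1 hn).2)
  have hseries : HasSum (fun k : ℕ => ∑ n ∈ Icc 0 ⌊y⌋₊, b n *
      ((log n / X) ^ (k + 1) / ((k : ℝ) + 1)))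
      (∑ n ∈ Icc 0 ⌊y⌋₊, b n * -log (1 - log n / X)) :=
    hasSum_sum fun n hn => (hasSum_pow_div_log_of_abs_lt_one (hlogn n hn)).mul_left _
  have hdiff := hseries.sub (summable_pow_succ_div_succ_sq (by positivity) hratio.le).hasSum
  have hbound := (hasSum_pow_div_log_of_abs_lt_one (x := log y / X)
    (by rwa [abs_of_nonneg (by positivity)])).mul_left (2 * C / log y)
  have hterm := H.abs_sum_mul_log_div_pow_sub_le hy hX0
  have hmain := abs_le.2 ⟨hasSum_le (fun k => (abs_le.1 (hterm k)).1) hbound.neg hdiff,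
    hasSum_le (fun k => (abs_le.1 (hterm k)).2) hdiff hbound⟩
  simp only [mul_neg, sum_neg_distrib] at hmain ⊢
  rwa [← neg_add', abs_neg] at hmain

theorem isBigO_sum_mul_log_one_sub_add_pi_sq_div_six (H : MertensWeight b C M) :
    (fun x : ℝ => ∑ n ∈ Icc 0 ⌊x / 2⌋₊, b n * log (1 - log n / log x) + π ^ 2 / 6) =O[atTop]
      fun x => log (log x) / log x := by
  have hrate : (fun x : ℝ => (log (log x) - log (log 2)) * (log (x / 2))⁻¹) =O[atTop]
      fun x => log (log x) / log x :=
    ((isBigO_refl _ _).sub (isBigO_const_log_log (log (log 2)))).mul isBigO_inv_log_half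
  refine .trans (.of_bound (2 * C + 2 * log 2) ?_) hrate
  filter_upwards [eventually_ge_atTop 4] with x hx
  have hlog := two_mul_log_two_le_log hx
  have hlog2 : 0 < log 2 := log_pos one_lt_two
  have hlogx : 0 < log x := by linarith
  have hhalf := log_half (x := x) (by linarith)
  have hlogh : 0 < log (x / 2) := by linarith
  have hsub : 1 - log (x / 2) / log x = log 2 / log x := by rw [hhalf]; field_simp; ring
  have hneglog : -log (1 - log (x / 2) / log x) = log (log x) - log (log 2) := by
    rw [hsub, log_div hlog2.ne' hlogx.ne']; ring
  have hlt : log (x / 2) / log x < 1 := (div_lt_one hlogx).2 (by linarith)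
  have hmain := H.abs_sum_mul_log_one_sub_add_tsum_le (y := x / 2) (X := log x) (by linarith)
    (by linarith)
  have hdilog := abs_pi_sq_div_six_sub_tsum_le (by positivity) hlt
  have hnonneg : 0 ≤ log (log x) - log (log 2) := sub_nonneg.2 (log_le_log hlog2 (by linarith))
  rw [hneglog] at hmain hdilog
  rw [hsub] at hdilog
  rw [norm_of_nonneg (mul_nonneg hnonneg (inv_nonneg.2 hlogh.le))]
  refine (congrArg abs (add_add_sub_cancel _ _ _).symm).trans_le <| (abs_add_le _ _).trans <|
    (add_le_add hmain hdilog).trans_eq ?_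
  field_simp

theorem isBigO_sum_half_sub_log_log_add (H : MertensWeight b C M) :
    (fun x : ℝ => ∑ n ∈ Icc 0 ⌊x / 2⌋₊, b n - (log (log x) + M)) =O[atTop]
      fun x => (log x)⁻¹ := by
  have hhalf : (fun x : ℝ => ∑ n ∈ Icc 0 ⌊x / 2⌋₊, b n - log (log (x / 2)) - M) =O[atTop]
      fun x => (log x)⁻¹ := by
    refine .trans (.of_bound (2 * C) ?_) isBigO_inv_log_half
    filter_upwards [eventually_ge_atTop 4] with x hx
    rw [norm_of_nonneg (inv_nonneg.2 (log_nonneg (by linarith))), ← div_eq_mul_inv]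
    exact H.abs_sum_sub_log_log_sub_le (by linarith)
  exact (hhalf.add isBigO_log_log_half_sub_log_log).congr_left fun x => by ring

theorem isBigO_sum_mul_sum_sub_sum_mul (H : MertensWeight b C M) :
    (fun x : ℝ => ∑ n ∈ Icc 0 ⌊x / 2⌋₊, b n * ∑ m ∈ Icc 0 ⌊x / n⌋₊, b m
        - (∑ n ∈ Icc 0 ⌊x / 2⌋₊, b n * (log (log x) + M)
          + ∑ n ∈ Icc 0 ⌊x / 2⌋₊, b n * log (1 - log n / log x))) =O[atTop]
      fun x => log (log x) / log x := by
  refine .trans (.of_bound (2 * C) ?_) H.isBigO_sum_mul_inv_log_sub_log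
  filter_upwards [eventually_ge_atTop 2] with x hx
  have hx0 : 0 < x := by linarith
  have hlogx : 0 < log x := log_pos (by linarith)
  have hpos : ∀ n ∈ Icc 0 ⌊x / 2⌋₊, 0 < log x - log n := fun n hn =>
    (log_pos one_lt_two).trans_le (log_two_le_log_sub_log hx hn)
  have hterm : ∀ n ∈ Icc 0 ⌊x / 2⌋₊, |b n * ∑ m ∈ Icc 0 ⌊x / n⌋₊, b m
      - (b n * (log (log x) + M) + b n * log (1 - log n / log x))|
      ≤ 2 * C * (b n * (log x - log n)⁻¹) := fun n hn => by
    rcases n.eq_zero_or_pos with rfl | hn_pos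
    · simp [H.map_zero]
    have hn0 : (0 : ℝ) < n := by exact_mod_cast hn_pos
    have hn2 : (n : ℝ) ≤ x / 2 := (Nat.le_floor_iff (by linarith)).1 (mem_Icc.1 hn).2
    have hquot : 1 < x / n := by rw [lt_div_iff₀ hn0]; linarith
    have hmertens := H.abs_sum_sub_log_log_sub_le hquot
    have hloglog : log (log x - log n) = log (log x) + log (1 - log n / log x) := by
      rw [one_sub_div hlogx.ne', log_div (hpos n hn).ne' hlogx.ne']; ring
    rw [log_div hx0.ne' hn0.ne', hloglog] at hmertens
    calc _ = b n * |∑ m ∈ Icc 0 ⌊x / n⌋₊, b m - (log (log x) + log (1 - log n / log x)) - M| := by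
          rw [← abs_of_nonneg (H.nonneg n), ← abs_mul, abs_of_nonneg (H.nonneg n)]
          ring_nf
      _ ≤ b n * (2 * C / (log x - log n)) := mul_le_mul_of_nonneg_left hmertens (H.nonneg n)
      _ = _ := by ring
  rw [norm_of_nonneg (sum_nonneg fun n hn => mul_nonneg (H.nonneg n)
    (inv_nonneg.2 (hpos n hn).le)), mul_sum, ← sum_add_distrib, ← sum_sub_distrib]
  exact (abs_sum_le_sum_abs _ _).trans (sum_le_sum hterm)

-- The constant `-π ^ 2 / 6 = -Li₂ 1` is the limit of `∑ b n * log (1 - log n / log x)`.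
theorem isBigO_sum_mul_sum_sub (H : MertensWeight b C M) :
    (fun x : ℝ => ∑ n ∈ Icc 0 ⌊x / 2⌋₊, b n * ∑ m ∈ Icc 0 ⌊x / n⌋₊, b m
        - ((log (log x) + M) ^ 2 - π ^ 2 / 6)) =O[atTop]
      fun x => log (log x) / log x := by
  have hsq : (fun x : ℝ => (log (log x) + M) * (∑ n ∈ Icc 0 ⌊x / 2⌋₊, b n - (log (log x) + M)))
      =O[atTop] fun x => log (log x) / log x :=
    ((isBigO_refl _ _).add (isBigO_const_log_log M)).mul H.isBigO_sum_half_sub_log_log_add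
  refine ((H.isBigO_sum_mul_sum_sub_sum_mul.add hsq).add
    H.isBigO_sum_mul_log_one_sub_add_pi_sq_div_six).congr_left fun x => ?_
  rw [← sum_mul]
  ring

end MertensWeight

section NormLE

open Real Finset

variable {ι : Type*} {f : ι → ℕ} {x y : ℝ}

/-- The indices of norm at most `x`, where `f` is the norm. The value is `∅` if there are infinitely
many of them; in this file `f` always tends to infinity. -/
def normLE (f : ι → ℕ) (x : ℝ) : Finset ι :=
  if h : {i | (f i : ℝ) ≤ x}.Finite then h.toFinset else ∅

theorem finite_setOf_natCast_le (hf : Tendsto f cofinite atTop) (x : ℝ) :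
    {i | (f i : ℝ) ≤ x}.Finite := by
  have hlt : ∀ᶠ i in cofinite, x < f i :=
    (tendsto_natCast_atTop_atTop.comp hf).eventually_gt_atTop x
  simpa [Filter.eventually_cofinite] using hlt

theorem coe_normLE (hf : Tendsto f cofinite atTop) (x : ℝ) :
    (normLE f x : Set ι) = {i | (f i : ℝ) ≤ x} := by
  rw [normLE, dif_pos (finite_setOf_natCast_le hf x), Set.Finite.coe_toFinset]

theorem mem_normLE (hf : Tendsto f cofinite atTop) {i : ι} : i ∈ normLE f x ↔ (f i : ℝ) ≤ x :=
  Set.ext_iff.1 (coe_normLE hf x) i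

theorem monotone_normLE (hf : Tendsto f cofinite atTop) : Monotone (normLE f) :=
  fun _ _ hxy _ hi => (mem_normLE hf).2 (((mem_normLE hf).1 hi).trans hxy)

theorem tendsto_normLE_atTop (hf : Tendsto f cofinite atTop) :
    Tendsto (normLE f) atTop atTop :=
  (monotone_normLE hf).tendsto_atTop_finset fun i => ⟨f i, (mem_normLE hf).2 le_rfl⟩

theorem normLE_eq_empty (hf : Tendsto f cofinite atTop) (hone : ∀ i, 1 ≤ f i) (hx : x < 1) :
    normLE f x = ∅ :=
  eq_empty_of_forall_notMem fun i hi =>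
    (((mem_normLE hf).1 hi).trans_lt hx).not_ge (mod_cast hone i)

/-- The total weight `∑ w i` of the indices of norm exactly `k`: the `k`-th coefficient of the
Dirichlet series `∑ w i (f i)⁻ˢ`. -/
def normFiberSum (f : ι → ℕ) (w : ι → ℝ) (k : ℕ) : ℝ :=
  ∑ i ∈ normLE f k with f i = k, w i

theorem normFiberSum_nonneg {w : ι → ℝ} (hw : ∀ i, 0 ≤ w i) (k : ℕ) : 0 ≤ normFiberSum f w k :=
  sum_nonneg fun i _ => hw i

theorem normFiberSum_eq_zero {k : ℕ} (hk : ∀ i, f i ≠ k) (w : ι → ℝ) : normFiberSum f w k = 0 := by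
  rw [normFiberSum, filter_false_of_mem fun i _ => hk i, sum_empty]

theorem sum_normLE_mul (hf : Tendsto f cofinite atTop) (hone : ∀ i, 1 ≤ f i) (w : ι → ℝ)
    (g : ℝ → ℝ) (x : ℝ) :
    ∑ i ∈ normLE f x, w i * g (f i) = ∑ k ∈ Icc 0 ⌊x⌋₊, normFiberSum f w k * g k := by
  have hmaps : ∀ i ∈ normLE f x, f i ∈ Icc 0 ⌊x⌋₊ := fun i hi =>
    mem_Icc.2 ⟨Nat.zero_le _, Nat.le_floor ((mem_normLE hf).1 hi)⟩
  rw [← sum_fiberwise_of_maps_to hmaps]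
  refine sum_congr rfl fun k hk => ?_
  have hfiber : {i ∈ normLE f x | f i = k} = {i ∈ normLE f k | f i = k} := by
    ext i
    simp only [mem_filter, mem_normLE hf]
    refine and_congr_left fun hi => ⟨fun _ => by rw [hi], fun _ => ?_⟩
    exact (Nat.le_floor_iff' (by have := hone i; lia)).1 (hi ▸ (mem_Icc.1 hk).2)
  rw [hfiber, normFiberSum, sum_mul]
  exact sum_congr rfl fun i hi => by rw [(mem_filter.1 hi).2]

theorem sum_normFiberSum (hf : Tendsto f cofinite atTop) (hone : ∀ i, 1 ≤ f i) (w : ι → ℝ)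
    (x : ℝ) : ∑ k ∈ Icc 0 ⌊x⌋₊, normFiberSum f w k = ∑ i ∈ normLE f x, w i := by
  simpa using (sum_normLE_mul hf hone w (fun _ => 1) x).symm

theorem abs_sum_normLE_sub_tsum_le (hf : Tendsto f cofinite atTop) (hone : ∀ i, 1 ≤ f i)
    {g : ι → ℝ} {s : ℝ} (hs : 0 ≤ s) (hg : Summable fun i => |g i| * (f i : ℝ) ^ s) (hy : 0 < y) :
    |∑ i ∈ normLE f y, g i - ∑' i, g i| ≤ y ^ (-s) * ∑' i, |g i| * (f i : ℝ) ^ s := by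
  have hsum : Summable g := hg.of_norm_bounded fun i =>
    le_mul_of_one_le_right (abs_nonneg _) (one_le_rpow (mod_cast hone i) hs)
  have htail : ∀ i : ↥((normLE f y : Set ι)ᶜ), ‖g i‖ ≤ y ^ (-s) * (|g i| * (f i : ℝ) ^ s) := by
    rintro ⟨i, hi⟩
    rw [Set.mem_compl_iff, mem_coe, mem_normLE hf, not_le] at hi
    calc |g i| = y ^ (-s) * (|g i| * y ^ s) := by
          rw [mul_left_comm, ← rpow_add hy, neg_add_cancel, rpow_zero, mul_one]
      _ ≤ y ^ (-s) * (|g i| * (f i : ℝ) ^ s) := by gcongr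
  rw [← hsum.sum_add_tsum_compl (s := normLE f y), sub_add_cancel_left, abs_neg]
  refine (tsum_of_norm_bounded ((hg.subtype _).mul_left _).hasSum htail).trans ?_
  rw [tsum_mul_left]
  gcongr
  exact hg.tsum_subtype_le _ _ fun i => by positivity

theorem rpow_le_mul_sum_two_rpow_pow {τ : ℝ} (hτ : 0 < τ) {n : ℕ} (hy : 1 ≤ y) (hyn : y < 2 ^ n) :
    y ^ τ ≤ 2 ^ τ * ∑ k ∈ range n with (2 : ℝ) ^ k ≤ y, ((2 : ℝ) ^ τ) ^ k := by
  obtain ⟨k, hk, hk'⟩ := exists_nat_pow_near hy one_lt_two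
  have hkn : k < n := (pow_lt_pow_iff_right₀ one_lt_two).1 (hk.trans_lt hyn)
  calc y ^ τ ≤ ((2 : ℝ) ^ (k + 1)) ^ τ := by gcongr
    _ = 2 ^ τ * (2 ^ τ) ^ k := by
        rw [← rpow_pow_comm zero_le_two, pow_succ']
    _ ≤ _ := by
        gcongr
        exact single_le_sum (f := fun k => ((2 : ℝ) ^ τ) ^ k) (fun _ _ => by positivity)
          (mem_filter.2 ⟨mem_range.2 hkn, hk⟩)

/-- A norm `f` and weights `w ≥ 0` for which the total weight of the indices of norm at most `x` is
at most `K * x`. -/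
structure LinearGrowth (f : ι → ℕ) (w : ι → ℝ) (K : ℝ) : Prop where
  tendsto : Tendsto f cofinite atTop
  one_le : ∀ i, 1 ≤ f i
  nonneg : ∀ i, 0 ≤ w i
  sum_le : ∀ x : ℝ, 1 ≤ x → ∑ i ∈ normLE f x, w i ≤ K * x

namespace LinearGrowth

variable {w : ι → ℝ} {K : ℝ}

theorem comp_injective (H : LinearGrowth f w K) {κ : Type*} {e : κ → ι}
    (he : Function.Injective e) : LinearGrowth (f ∘ e) (w ∘ e) K where
  tendsto := H.tendsto.comp he.tendsto_cofinite
  one_le i := H.one_le (e i)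
  nonneg i := H.nonneg (e i)
  sum_le x hx := by
    calc ∑ i ∈ normLE (f ∘ e) x, (w ∘ e) i = ∑ i ∈ (normLE (f ∘ e) x).map ⟨e, he⟩, w i := by
          simp
      _ ≤ ∑ i ∈ normLE f x, w i := by
          refine sum_le_sum_of_subset_of_nonneg (fun i hi => ?_) fun i _ _ => H.nonneg i
          obtain ⟨j, hj, rfl⟩ := mem_map.1 hi
          exact (mem_normLE H.tendsto).2
            ((mem_normLE (H.tendsto.comp he.tendsto_cofinite)).1 hj)
      _ ≤ K * x := H.sum_le x hx

theorem const_nonneg (H : LinearGrowth f w K) : 0 ≤ K := by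
  simpa using (sum_nonneg fun i _ => H.nonneg i).trans (H.sum_le 1 le_rfl)

theorem sum_le_of_nonneg (H : LinearGrowth f w K) (hx : 0 ≤ x) : ∑ i ∈ normLE f x, w i ≤ K * x := by
  rcases lt_or_ge x 1 with hx1 | hx1
  · rw [normLE_eq_empty H.tendsto H.one_le hx1, sum_empty]
    exact mul_nonneg H.const_nonneg hx
  · exact H.sum_le x hx1

theorem summable_normFiberSum_mul_rpow_neg (H : LinearGrowth f w K) {s : ℝ} (hs : 1 < s) :
    Summable fun k : ℕ => normFiberSum f w k * (k : ℝ) ^ (-s) := by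
  have hO : (fun n : ℕ => ∑ k ∈ Icc 1 n, normFiberSum f w k)
      =O[atTop] fun n : ℕ => (n : ℝ) ^ (1 : ℝ) := by
    refine IsBigO.of_bound K (.of_forall fun n => ?_)
    rw [norm_of_nonneg (sum_nonneg fun k _ => normFiberSum_nonneg H.nonneg k), rpow_one,
      norm_of_nonneg n.cast_nonneg]
    calc ∑ k ∈ Icc 1 n, normFiberSum f w k ≤ ∑ k ∈ Icc 0 ⌊(n : ℝ)⌋₊, normFiberSum f w k :=
          sum_le_sum_of_subset_of_nonneg (by simpa using Icc_subset_Icc_left zero_le_one)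
            fun k _ _ => normFiberSum_nonneg H.nonneg k
      _ = ∑ i ∈ normLE f n, w i := sum_normFiberSum H.tendsto H.one_le w n
      _ ≤ K * n := H.sum_le_of_nonneg n.cast_nonneg
  have hL := LSeriesSummable_of_sum_norm_bigO_and_nonneg hO (normFiberSum_nonneg H.nonneg)
    zero_le_one (s := (s : ℂ)) (by simpa using hs)
  refine hL.norm.congr fun k => ?_
  rw [LSeries.norm_term_eq]
  rcases eq_or_ne k 0 with rfl | hk
  · simp [zero_rpow (by linarith : -s ≠ 0)]
  · rw [if_neg hk, Complex.norm_real, norm_of_nonneg (normFiberSum_nonneg H.nonneg k),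
      Complex.ofReal_re, rpow_neg k.cast_nonneg, div_eq_mul_inv]

theorem summable_mul_rpow_neg (H : LinearGrowth f w K) {s : ℝ} (hs : 1 < s) :
    Summable fun i => w i * (f i : ℝ) ^ (-s) := by
  have hsum := H.summable_normFiberSum_mul_rpow_neg hs
  have hpos (i : ι) : 0 ≤ w i * (f i : ℝ) ^ (-s) :=
    mul_nonneg (H.nonneg i) (rpow_nonneg (Nat.cast_nonneg _) _)
  refine summable_of_sum_le hpos (c := ∑' k : ℕ, normFiberSum f w k * (k : ℝ) ^ (-s)) fun u => ?_
  obtain ⟨x, hx⟩ := ((tendsto_normLE_atTop H.tendsto).eventually (eventually_ge_atTop u)).exists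
  calc ∑ i ∈ u, w i * (f i : ℝ) ^ (-s) ≤ ∑ i ∈ normLE f x, w i * (f i : ℝ) ^ (-s) :=
        sum_le_sum_of_subset_of_nonneg hx fun i _ _ => hpos i
    _ = ∑ k ∈ Icc 0 ⌊x⌋₊, normFiberSum f w k * (k : ℝ) ^ (-s) :=
        sum_normLE_mul H.tendsto H.one_le w (· ^ (-s)) x
    _ ≤ _ := hsum.sum_le_tsum _ fun k _ =>
        mul_nonneg (normFiberSum_nonneg H.nonneg k) (rpow_nonneg k.cast_nonneg _)

theorem sum_mul_div_rpow_le_sum_range (H : LinearGrowth f w K) {τ : ℝ} (hτ : 0 < τ) {n : ℕ}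
    (hx : 0 < x) (hxn : x < 2 ^ n) :
    ∑ i ∈ normLE f x, w i * (x / f i) ^ τ
      ≤ 2 ^ τ * ∑ k ∈ range n, ((2 : ℝ) ^ τ) ^ k * ∑ i ∈ normLE f (x / 2 ^ k), w i := by
  have hpos (i : ι) : (1 : ℝ) ≤ f i := mod_cast H.one_le i
  calc ∑ i ∈ normLE f x, w i * (x / f i) ^ τ
      ≤ ∑ i ∈ normLE f x,
          w i * (2 ^ τ * ∑ k ∈ range n with (2 : ℝ) ^ k ≤ x / f i, ((2 : ℝ) ^ τ) ^ k) := by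
        refine sum_le_sum fun i hi => mul_le_mul_of_nonneg_left ?_ (H.nonneg i)
        refine rpow_le_mul_sum_two_rpow_pow hτ ?_ ((div_le_self hx.le (hpos i)).trans_lt hxn)
        rw [one_le_div (by linarith [hpos i])]
        exact (mem_normLE H.tendsto).1 hi
    _ = 2 ^ τ * ∑ k ∈ range n,
          ((2 : ℝ) ^ τ) ^ k * ∑ i ∈ normLE f x with (2 : ℝ) ^ k ≤ x / f i, w i := by
        simp only [mul_sum, sum_filter]
        rw [sum_comm]
        refine sum_congr rfl fun k _ => sum_congr rfl fun i _ => ?_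
        split_ifs <;> ring
    _ = _ := by
        refine congrArg _ (sum_congr rfl fun k _ => congrArg _ (sum_congr ?_ fun _ _ => rfl))
        ext i
        have hi : (2 : ℝ) ^ k ≤ x / f i ↔ (f i : ℝ) ≤ x / 2 ^ k := by
          rw [le_div_iff₀ (by linarith [hpos i]), le_div_iff₀ (by positivity), mul_comm]
        rw [mem_filter, mem_normLE H.tendsto, mem_normLE H.tendsto, hi, and_iff_right_iff_imp]
        exact fun h => h.trans (div_le_self hx.le (one_le_pow₀ one_le_two))

theorem exists_sum_mul_div_rpow_le (H : LinearGrowth f w K) {τ : ℝ} (hτ₀ : 0 < τ) (hτ₁ : τ < 1) :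
    ∃ B, 0 ≤ B ∧ ∀ x : ℝ, 0 < x → ∑ i ∈ normLE f x, w i * (x / f i) ^ τ ≤ B * x := by
  have hK := H.const_nonneg
  have hratio : (2 : ℝ) ^ τ / 2 < 1 := by
    rw [div_lt_one two_pos]
    exact rpow_lt_self_of_one_lt one_lt_two hτ₁
  have hgeom := summable_geometric_of_lt_one (by positivity) hratio
  refine ⟨2 ^ τ * (K * ∑' k : ℕ, ((2 : ℝ) ^ τ / 2) ^ k), by positivity, fun x hx => ?_⟩
  obtain ⟨n, hn⟩ := pow_unbounded_of_one_lt x one_lt_two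
  calc ∑ i ∈ normLE f x, w i * (x / f i) ^ τ
      ≤ 2 ^ τ * ∑ k ∈ range n, ((2 : ℝ) ^ τ) ^ k * ∑ i ∈ normLE f (x / 2 ^ k), w i :=
        H.sum_mul_div_rpow_le_sum_range hτ₀ hx hn
    _ ≤ 2 ^ τ * ∑ k ∈ range n, ((2 : ℝ) ^ τ) ^ k * (K * (x / 2 ^ k)) := by
        gcongr
        exact H.sum_le_of_nonneg (by positivity)
    _ = 2 ^ τ * (K * ∑ k ∈ range n, ((2 : ℝ) ^ τ / 2) ^ k) * x := by
        simp only [mul_sum, sum_mul]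
        exact sum_congr rfl fun k _ => by rw [div_pow]; ring
    _ ≤ _ := by
        gcongr
        exact hgeom.sum_le_tsum _ fun k _ => by positivity

end LinearGrowth

end NormLE

section MonoidNorm

open Real Finset

variable {P : Type*} {N : P → ℕ}

theorem Nm_zero (N : P → ℕ) : Nm N 0 = 1 :=
  Finsupp.prod_zero_index

theorem Nm_add (m n : P →₀ ℕ) : Nm N (m + n) = Nm N m * Nm N n :=
  Finsupp.prod_add_index' (fun _ => pow_zero _) fun _ _ _ => pow_add _ _ _

theorem Nm_single (p : P) (k : ℕ) : Nm N (Finsupp.single p k) = N p ^ k :=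
  Finsupp.prod_single_index (pow_zero _)

theorem Nm_nsmul (k : ℕ) (m : P →₀ ℕ) : Nm N (k • m) = Nm N m ^ k := by
  induction k with
  | zero => rw [zero_nsmul, Nm_zero, pow_zero]
  | succ k ih => rw [succ_nsmul, Nm_add, ih, pow_succ]

theorem Nm_comp_single_one (N : P → ℕ) : Nm N ∘ (Finsupp.single · 1) = N :=
  funext fun p => by rw [Function.comp_apply, Nm_single, pow_one]

theorem one_le_Nm (hN : ∀ p, 1 ≤ N p) (m : P →₀ ℕ) : 1 ≤ Nm N m :=
  Nat.succ_le_of_lt (Finset.prod_pos fun p _ => pow_pos (hN p) _)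

theorem Nm_mono (hN : ∀ p, 1 ≤ N p) {d n : P →₀ ℕ} (hdn : d ≤ n) : Nm N d ≤ Nm N n := by
  rw [← tsub_add_cancel_of_le hdn, Nm_add]
  exact Nat.le_mul_of_pos_left _ (one_le_Nm hN _)

theorem le_Nm_of_ne_zero (hN : ∀ p, 1 ≤ N p) {p : P} {n : P →₀ ℕ} (hp : n p ≠ 0) :
    N p ≤ Nm N n := by
  have hle : Finsupp.single p 1 ≤ n := Finsupp.single_le_iff.2 (Nat.one_le_iff_ne_zero.2 hp)
  simpa [Nm_single] using Nm_mono hN hle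

theorem log_Nm (hN : ∀ p, 1 ≤ N p) {n : P →₀ ℕ} {s : Finset P} (hs : n.support ⊆ s) :
    log (Nm N n) = ∑ p ∈ s, log (N p) * n p := by
  rw [Nm, Finsupp.prod_of_support_subset n hs _ fun _ _ => pow_zero _, Nat.cast_prod, log_prod]
  · exact sum_congr rfl fun p _ => by rw [Nat.cast_pow, log_pow, mul_comm]
  · exact fun p _ => Nat.cast_ne_zero.2 (pow_pos (hN p) _).ne'

/-- The squarefree element `∏_{p ∈ T} p` of the free abelian monoid. -/
def primeProd (T : Finset P) : P →₀ ℕ :=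
  Finsupp.indicator T fun _ _ => 1

theorem primeProd_apply (T : Finset P) (p : P) : primeProd T p = if p ∈ T then 1 else 0 := by
  rw [primeProd, Finsupp.indicator_apply]
  split_ifs <;> rfl

theorem support_primeProd (T : Finset P) : (primeProd T).support = T := by
  ext p
  simp [primeProd_apply]

theorem primeProd_injective : Function.Injective (primeProd (P := P)) :=
  Function.LeftInverse.injective (g := Finsupp.support) support_primeProd

theorem log_Nm_primeProd (hN : ∀ p, 1 ≤ N p) (T : Finset P) :
    log (Nm N (primeProd T)) = ∑ p ∈ T, log (N p) := by
  rw [log_Nm hN (support_primeProd T).subset]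
  exact sum_congr rfl fun p hp => by rw [primeProd_apply, if_pos hp, Nat.cast_one, mul_one]

theorem nsmul_primeProd_le_iff {h : ℕ} (hh : h ≠ 0) {T : Finset P} {n : P →₀ ℕ} :
    h • primeProd T ≤ n ↔ T ⊆ {p ∈ n.support | h ≤ n p} := by
  have happly (p : P) : (h • primeProd T) p = if p ∈ T then h else 0 := by
    simp [primeProd_apply]
  refine ⟨fun hle p hp => ?_, fun hT p => ?_⟩
  · have := hle p
    rw [happly, if_pos hp] at this
    exact mem_filter.2 ⟨Finsupp.mem_support_iff.2 (by lia), this⟩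
  · rw [happly]
    split_ifs with hp
    · exact (mem_filter.1 (hT hp)).2
    · exact Nat.zero_le _

theorem sum_normLE_filter_le {E : Type*} [AddCommMonoid E] (hN : ∀ p, 1 ≤ N p)
    (hf : Tendsto (Nm N) cofinite atTop) (x : ℝ) (d : P →₀ ℕ) (F : (P →₀ ℕ) → E) :
    ∑ n ∈ normLE (Nm N) x with d ≤ n, F n = ∑ m ∈ normLE (Nm N) (x / Nm N d), F (m + d) := by
  have hd : (0 : ℝ) < Nm N d := mod_cast one_le_Nm hN d
  have hmem (m : P →₀ ℕ) : m ∈ normLE (Nm N) (x / Nm N d) ↔ m + d ∈ normLE (Nm N) x := by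
    rw [mem_normLE hf, mem_normLE hf, le_div_iff₀ hd, Nm_add, Nat.cast_mul]
  refine (sum_bij' (fun m _ => m + d) (fun n _ => n - d) (fun m hm => ?_) (fun n hn => ?_)
    (fun m _ => add_tsub_cancel_right m d) (fun n hn => ?_) fun _ _ => rfl).symm
  · exact mem_filter.2 ⟨(hmem m).1 hm, le_add_self⟩
  · rw [hmem, tsub_add_cancel_of_le (mem_filter.1 hn).2]
    exact (mem_filter.1 hn).1
  · exact tsub_add_cancel_of_le (mem_filter.1 hn).2

theorem sum_normLE_mul_sum_powerset (hN : ∀ p, 1 ≤ N p) (hf : Tendsto (Nm N) cofinite atTop)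
    {h : ℕ} (hh : h ≠ 0) (x : ℝ) (F : (P →₀ ℕ) → ℝ) (w : Finset P → ℝ) :
    ∑ n ∈ normLE (Nm N) x, F n * ∑ T ∈ {p ∈ n.support | h ≤ n p}.powerset, w T
      = ∑ T ∈ normLE (Nm N ∘ primeProd) x,
          w T * ∑ m ∈ normLE (Nm N) (x / (Nm N (primeProd T) : ℝ) ^ h),
            F (m + h • primeProd T) := by
  have hf' := hf.comp primeProd_injective.tendsto_cofinite
  have hdivisors : ∀ n ∈ normLE (Nm N) x, F n * ∑ T ∈ {p ∈ n.support | h ≤ n p}.powerset, w T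
      = ∑ T ∈ normLE (Nm N ∘ primeProd) x, if h • primeProd T ≤ n then w T * F n else 0 := by
    intro n hn
    rw [← sum_filter, mul_comm, sum_mul]
    refine sum_congr (ext fun T => ?_) fun _ _ => rfl
    rw [mem_powerset, mem_filter, ← nsmul_primeProd_le_iff hh, mem_normLE hf']
    refine ⟨fun hle => ⟨?_, hle⟩, fun hle => hle.2⟩
    have hpow : Nm N (primeProd T) ≤ Nm N n := by
      calc Nm N (primeProd T) ≤ Nm N (primeProd T) ^ h := Nat.le_self_pow hh _
        _ = Nm N (h • primeProd T) := (Nm_nsmul h _).symm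
        _ ≤ Nm N n := Nm_mono hN hle
    exact (Nat.cast_le.2 hpow).trans ((mem_normLE hf).1 hn)
  rw [sum_congr rfl hdivisors, sum_comm]
  refine sum_congr rfl fun T _ => ?_
  rw [← sum_filter, ← mul_sum, sum_normLE_filter_le hN hf, Nm_nsmul, Nat.cast_pow]

end MonoidNorm

section NormCount

open Real Finset

variable {P : Type*} {N : P → ℕ} {κ θ τ C x y : ℝ}

/-- A uniform version of Condition (★): the number of elements of norm at most `y` is `κ * y` up to
an error at most `C * y ^ τ`, for all `y > 0`. Enlarging the exponent of (★), we may assume that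
`1 / 2 < τ`. -/
structure NormCount (N : P → ℕ) (κ τ C : ℝ) : Prop where
  two_le : ∀ p, 2 ≤ N p
  tendsto : Tendsto (Nm N) cofinite atTop
  density_pos : 0 < κ
  half_lt : 1 / 2 < τ
  lt_one : τ < 1
  abs_card_sub_le : ∀ y : ℝ, 0 < y → |(#(normLE (Nm N) y) : ℝ) - κ * y| ≤ C * y ^ τ

theorem starCond_tendsto_Nm (hstar : StarCond N κ θ) : Tendsto (Nm N) cofinite atTop := by
  obtain ⟨hκ, -, hθ, hcount⟩ := hstar
  refine tendsto_atTop.2 fun n => ?_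
  by_contra hinf
  have hsmall : (fun y : ℝ => κ * y) =O[atTop] fun y : ℝ => y ^ θ := by
    refine hcount.neg_left.congr' ?_ EventuallyEq.rfl
    filter_upwards [eventually_ge_atTop (n : ℝ)] with y hy
    have hinf' : {m : P →₀ ℕ | (Nm N m : ℝ) ≤ y}.Infinite :=
      Set.Infinite.mono (fun m hm => (Nat.cast_le.2 (not_le.1 hm).le).trans hy) hinf
    rw [hinf'.ncard, Nat.cast_zero, zero_sub, neg_neg]
  have hlittle : (fun y : ℝ => y ^ θ) =o[atTop] fun y : ℝ => y := by
    refine isLittleO_of_tendsto' ((eventually_ne_atTop 0).mono fun y hy h => absurd h hy) ?_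
    refine (tendsto_rpow_neg_atTop (sub_pos.2 hθ)).congr' ?_
    filter_upwards [eventually_gt_atTop 0] with y hy
    rw [neg_sub, rpow_sub_one hy.ne']
  have hself : (fun y : ℝ => y) =o[atTop] fun y : ℝ => y :=
    ((isBigO_const_mul_self κ⁻¹ (fun y : ℝ => κ * y) atTop).congr_left fun y => by
      rw [inv_mul_cancel_left₀ hκ.ne']).trans_isLittleO (hsmall.trans_isLittleO hlittle)
  exact absurd hself (isLittleO_irrefl (eventually_ne_atTop 0).frequently)

theorem starCond_isBigO_card (hstar : StarCond N κ θ) :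
    (fun y : ℝ => (#(normLE (Nm N) y) : ℝ) - κ * y) =O[atTop] fun y : ℝ => y ^ θ :=
  hstar.2.2.2.congr_left fun y => by
    rw [← Set.ncard_coe_finset, coe_normLE (starCond_tendsto_Nm hstar)]

theorem abs_card_normLE_sub_le_of_le (hκ : 0 ≤ κ) (hf : Tendsto (Nm N) cofinite atTop)
    (hx : 0 ≤ x) (hxy : x ≤ y) :
    |(#(normLE (Nm N) x) : ℝ) - κ * x| ≤ #(normLE (Nm N) y) + κ * y := by
  have hcard : (#(normLE (Nm N) x) : ℝ) ≤ #(normLE (Nm N) y) :=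
    mod_cast card_le_card (monotone_normLE hf hxy)
  have hlin : κ * x ≤ κ * y := by gcongr
  rw [abs_le]
  constructor <;> linarith [mul_nonneg hκ hx, (#(normLE (Nm N) x)).cast_nonneg (α := ℝ)]

theorem exists_abs_card_normLE_sub_le (hstar : StarCond N κ θ) (hθτ : θ ≤ τ) :
    ∃ C, 0 ≤ C ∧ ∀ y : ℝ, 1 ≤ y → |(#(normLE (Nm N) y) : ℝ) - κ * y| ≤ C * y ^ τ := by
  have hκ := hstar.1
  have hτ : 0 ≤ τ := hstar.2.1.trans hθτ
  obtain ⟨K, hK, hbound⟩ := (starCond_isBigO_card hstar).exists_pos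
  obtain ⟨X, hX⟩ := eventually_atTop.1 hbound.bound
  set Y := max X 1
  set B : ℝ := #(normLE (Nm N) Y) + κ * Y
  have hB : 0 ≤ B := by positivity
  refine ⟨max K B, hK.le.trans (le_max_left _ _), fun y hy => ?_⟩
  rcases le_total y Y with hyY | hyY
  · calc |(#(normLE (Nm N) y) : ℝ) - κ * y| ≤ B :=
          abs_card_normLE_sub_le_of_le hκ.le (starCond_tendsto_Nm hstar) (by linarith) hyY
      _ ≤ B * y ^ τ := le_mul_of_one_le_right hB (one_le_rpow hy hτ)
      _ ≤ _ := by gcongr; exact le_max_right _ _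
  · calc |(#(normLE (Nm N) y) : ℝ) - κ * y| ≤ K * ‖y ^ θ‖ := hX y ((le_max_left _ _).trans hyY)
      _ = K * y ^ θ := by rw [norm_of_nonneg (by positivity)]
      _ ≤ max K B * y ^ τ := by gcongr; exact le_max_left _ _

theorem exists_normCount (hN : ∀ p, 2 ≤ N p) (hstar : StarCond N κ θ) :
    ∃ τ C, NormCount N κ τ C := by
  have hτ : max θ (3 / 4) < 1 := max_lt hstar.2.2.1 (by norm_num)
  have hτ' : 3 / 4 ≤ max θ (3 / 4) := le_max_right _ _
  obtain ⟨C, hC, hbound⟩ := exists_abs_card_normLE_sub_le hstar (le_max_left θ (3 / 4))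
  have hf := starCond_tendsto_Nm hstar
  have hκ := hstar.1
  refine ⟨max θ (3 / 4), C + κ, hN, hf, hκ, by linarith, hτ, fun y hy => ?_⟩
  rcases lt_or_ge y 1 with hy1 | hy1
  · rw [normLE_eq_empty hf (one_le_Nm fun p => one_le_two.trans (hN p)) hy1, card_empty,
      Nat.cast_zero, zero_sub, abs_neg, abs_of_pos (mul_pos hκ hy)]
    have hle : y ≤ y ^ max θ (3 / 4) := self_le_rpow_of_le_one hy.le hy1.le hτ.le
    calc κ * y ≤ κ * y ^ max θ (3 / 4) := by gcongr
      _ ≤ _ := by gcongr; linarith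
  · refine (hbound y hy1).trans ?_
    gcongr
    linarith

namespace NormCount

theorem one_le (H : NormCount N κ τ C) (p : P) : 1 ≤ N p :=
  one_le_two.trans (H.two_le p)

theorem two_le_cast (H : NormCount N κ τ C) (p : P) : (2 : ℝ) ≤ N p :=
  mod_cast H.two_le p

theorem one_le_Nm_cast (H : NormCount N κ τ C) (m : P →₀ ℕ) : (1 : ℝ) ≤ Nm N m :=
  mod_cast one_le_Nm H.one_le m

theorem exponent_pos (H : NormCount N κ τ C) : 0 < τ := by
  linarith [H.half_lt]

theorem error_nonneg (H : NormCount N κ τ C) : 0 ≤ C := by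
  simpa using (abs_nonneg _).trans (H.abs_card_sub_le 1 one_pos)

theorem normLE_eq_empty (H : NormCount N κ τ C) (hy : y < 1) : normLE (Nm N) y = ∅ :=
  _root_.normLE_eq_empty H.tendsto (one_le_Nm H.one_le) hy

theorem linearGrowth (H : NormCount N κ τ C) : LinearGrowth (Nm N) 1 (κ + C) where
  tendsto := H.tendsto
  one_le := one_le_Nm H.one_le
  nonneg _ := zero_le_one
  sum_le x hx := by
    have hbound := (abs_le.1 (H.abs_card_sub_le x (by linarith))).2
    have hpow : C * x ^ τ ≤ C * x :=
      mul_le_mul_of_nonneg_left (rpow_le_self_of_one_le hx H.lt_one.le) H.error_nonneg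
    simp only [Pi.one_apply, sum_const, nsmul_one]
    linarith

theorem linearGrowth_prime (H : NormCount N κ τ C) : LinearGrowth N 1 (κ + C) :=
  Nm_comp_single_one N ▸
    H.linearGrowth.comp_injective (Finsupp.single_left_injective one_ne_zero)

theorem linearGrowth_primeProd (H : NormCount N κ τ C) :
    LinearGrowth (Nm N ∘ primeProd) 1 (κ + C) :=
  H.linearGrowth.comp_injective primeProd_injective

theorem card_normLE_le (H : NormCount N κ τ C) (hx : 0 ≤ x) :
    (#(normLE (Nm N) x) : ℝ) ≤ (κ + C) * x := by
  simpa using H.linearGrowth.sum_le_of_nonneg hx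

end NormCount

end NormCount

section ReciprocalSums

open Real Finset MeasureTheory

variable {c : ℕ → ℝ} {κ τ C x y : ℝ}

theorem measurable_sum_floor_sub (c : ℕ → ℝ) (κ : ℝ) :
    Measurable fun t : ℝ => ∑ k ∈ Icc 0 ⌊t⌋₊, c k - κ * t :=
  ((Measurable.of_discrete (f := fun n : ℕ => ∑ k ∈ Icc 0 n, c k)).comp Nat.measurable_floor).sub
    (measurable_const_mul κ)

theorem inv_sq_mul_rpow (hx : 0 < x) (τ : ℝ) : (x ^ 2)⁻¹ * x ^ τ = x ^ (τ - 2) := by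
  rw [rpow_sub hx, rpow_two, div_eq_inv_mul]

theorem abs_inv_sq_mul_sum_sub_le
    (hc : ∀ t : ℝ, 1 ≤ t → |∑ k ∈ Icc 0 ⌊t⌋₊, c k - κ * t| ≤ C * t ^ τ) (hx : 1 ≤ x) :
    |(x ^ 2)⁻¹ * (∑ k ∈ Icc 0 ⌊x⌋₊, c k - κ * x)| ≤ C * x ^ (τ - 2) := by
  have hx0 : 0 < x := by linarith
  rw [abs_mul, abs_of_pos (by positivity), ← inv_sq_mul_rpow hx0, mul_left_comm]
  gcongr
  exact hc x hx

theorem integrableOn_inv_sq_mul_sum_sub (hτ : τ < 1)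
    (hc : ∀ t : ℝ, 1 ≤ t → |∑ k ∈ Icc 0 ⌊t⌋₊, c k - κ * t| ≤ C * t ^ τ) (hx : 1 ≤ x) :
    IntegrableOn (fun t : ℝ => (t ^ 2)⁻¹ * (∑ k ∈ Icc 0 ⌊t⌋₊, c k - κ * t)) (Set.Ioi x) := by
  refine Integrable.mono' (g := fun t : ℝ => C * t ^ (τ - 2))
    ((integrableOn_Ioi_rpow_of_lt (by linarith) (by linarith)).const_mul C)
    ((measurable_id.pow_const 2).inv.mul (measurable_sum_floor_sub c κ)).aestronglyMeasurable
    ((ae_restrict_iff' measurableSet_Ioi).2 (ae_of_all _ fun t ht => ?_))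
  exact abs_inv_sq_mul_sum_sub_le hc (hx.trans (le_of_lt ht))

theorem abs_integral_inv_sq_mul_sum_sub_le (hτ : τ < 1)
    (hc : ∀ t : ℝ, 1 ≤ t → |∑ k ∈ Icc 0 ⌊t⌋₊, c k - κ * t| ≤ C * t ^ τ) (hx : 1 ≤ x) :
    |∫ t in Set.Ioi x, (t ^ 2)⁻¹ * (∑ k ∈ Icc 0 ⌊t⌋₊, c k - κ * t)|
      ≤ C / (1 - τ) * x ^ (τ - 1) := by
  calc |∫ t in Set.Ioi x, (t ^ 2)⁻¹ * (∑ k ∈ Icc 0 ⌊t⌋₊, c k - κ * t)|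
      ≤ ∫ t in Set.Ioi x, C * t ^ (τ - 2) := by
        rw [← Real.norm_eq_abs]
        refine norm_integral_le_of_norm_le
          ((integrableOn_Ioi_rpow_of_lt (by linarith) (by linarith)).const_mul C)
          ((ae_restrict_iff' measurableSet_Ioi).2 (ae_of_all _ fun t ht => ?_))
        exact abs_inv_sq_mul_sum_sub_le hc (hx.trans (le_of_lt ht))
    _ = C / (1 - τ) * x ^ (τ - 1) := by
        rw [integral_const_mul, integral_Ioi_rpow_of_lt (by linarith) (by linarith),
          show τ - 2 + 1 = τ - 1 by ring, ← neg_sub 1 τ, div_neg, neg_div, neg_neg]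
        ring

theorem sum_Ioc_one_inv_mul_eq (hy : 1 ≤ y) :
    ∑ k ∈ Ioc 1 ⌊y⌋₊, (k : ℝ)⁻¹ * c k = κ * log y + y⁻¹ * (∑ k ∈ Icc 0 ⌊y⌋₊, c k - κ * y)
      - (∑ k ∈ Icc 0 1, c k - κ)
      + ∫ t in 1..y, (t ^ 2)⁻¹ * (∑ k ∈ Icc 0 ⌊t⌋₊, c k - κ * t) := by
  have hne : ∀ t ∈ Set.Icc 1 y, t ≠ 0 := fun t ht => by linarith [ht.1]
  have habel := sum_mul_sub_integral_mul_deriv (c := c) (f := fun t => t⁻¹)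
    (f' := fun t => -(t ^ 2)⁻¹) (g := (κ * ·)) (g' := fun _ => κ) zero_le_one hy
    (fun t ht => hasDerivAt_inv (hne t ht))
    ((continuousOn_pow 2).inv₀ fun t ht => pow_ne_zero 2 (hne t ht)).neg
    (fun t _ => by simpa using (hasDerivAt_id t).const_mul κ) continuousOn_const
  have hlog : ∫ t in 1..y, t⁻¹ * κ = κ * log y := by
    rw [intervalIntegral.integral_mul_const, integral_inv_of_pos one_pos (by linarith), div_one,
      mul_comm]
  simp only [hlog, Nat.floor_one, inv_one, one_mul, mul_one, neg_mul,
    intervalIntegral.integral_neg] at habel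
  linarith

theorem exists_abs_sum_inv_mul_sub_log_le (hτ : τ < 1)
    (hc : ∀ t : ℝ, 1 ≤ t → |∑ k ∈ Icc 0 ⌊t⌋₊, c k - κ * t| ≤ C * t ^ τ) :
    ∃ γ K, ∀ y : ℝ, 1 ≤ y →
      |∑ k ∈ Icc 0 ⌊y⌋₊, (k : ℝ)⁻¹ * c k - κ * log y - γ| ≤ K * y ^ (τ - 1) := by
  set g : ℝ → ℝ := fun t => (t ^ 2)⁻¹ * (∑ k ∈ Icc 0 ⌊t⌋₊, c k - κ * t)
  refine ⟨∑ k ∈ Icc (0 : ℕ) 1, (k : ℝ)⁻¹ * c k - (∑ k ∈ Icc 0 1, c k - κ) + ∫ t in Set.Ioi 1, g t,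
    C + C / (1 - τ), fun y hy => ?_⟩
  have hy0 : 0 < y := by linarith
  have htail := abs_integral_inv_sq_mul_sum_sub_le hτ hc hy
  have hsplit : ∫ t in 1..y, g t = (∫ t in Set.Ioi 1, g t) - ∫ t in Set.Ioi y, g t :=
    (intervalIntegral.integral_Ioi_sub_Ioi (integrableOn_inv_sq_mul_sum_sub hτ hc le_rfl) hy).symm
  have hboundary : |y⁻¹ * (∑ k ∈ Icc 0 ⌊y⌋₊, c k - κ * y)| ≤ C * y ^ (τ - 1) := by
    rw [abs_mul, abs_of_pos (by positivity), rpow_sub_one hy0.ne', div_eq_inv_mul, mul_left_comm]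
    gcongr
    exact hc y hy
  rw [← sum_Icc_zero_add_sum_Ioc _ (Nat.one_le_floor_iff _ |>.2 hy), sum_Ioc_one_inv_mul_eq hy,
    hsplit]
  rw [abs_le] at htail hboundary ⊢
  constructor <;> linarith

end ReciprocalSums

section Chebyshev

open Real Finset

variable {P : Type*} {N : P → ℕ} {κ τ C x y : ℝ}

theorem sum_powerset_neg_one_pow_card_real (V : Finset P) :
    ∑ T ∈ V.powerset, (-1 : ℝ) ^ #T = if V = ∅ then 1 else 0 := by
  exact_mod_cast congrArg (Int.cast : ℤ → ℝ) (sum_powerset_neg_one_pow_card (x := V))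

theorem sum_powerset_insert_neg_one_pow_card_mul_sum (l : P → ℝ) {p : P} {V : Finset P}
    (hp : p ∉ V) :
    ∑ T ∈ (insert p V).powerset, (-1 : ℝ) ^ #T * ∑ q ∈ T, l q
      = -(l p * if V = ∅ then 1 else 0) := by
  rw [sum_powerset_insert hp, ← sum_powerset_neg_one_pow_card_real, mul_sum, ← sum_add_distrib,
    ← sum_neg_distrib]
  refine sum_congr rfl fun T hT => ?_
  have hpT : p ∉ T := fun h => hp (mem_powerset.1 hT h)
  rw [sum_insert hpT, card_insert_of_notMem hpT]
  ring

theorem filter_one_le_support (n : P →₀ ℕ) : {p ∈ n.support | 1 ≤ n p} = n.support :=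
  filter_true_of_mem fun _ hp => Nat.one_le_iff_ne_zero.2 (Finsupp.mem_support_iff.1 hp)

namespace NormCount

theorem exists_abs_sum_inv_Nm_sub_log_le (H : NormCount N κ τ C) :
    ∃ γ K, ∀ y : ℝ, 1 ≤ y →
      |∑ m ∈ normLE (Nm N) y, (Nm N m : ℝ)⁻¹ - κ * log y - γ| ≤ K * y ^ (τ - 1) := by
  have hone := one_le_Nm H.one_le
  obtain ⟨γ, K, hK⟩ := exists_abs_sum_inv_mul_sub_log_le (c := normFiberSum (Nm N) 1) H.lt_one
    fun t ht => by
      rw [sum_normFiberSum H.tendsto hone]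
      simpa using H.abs_card_sub_le t (by linarith)
  refine ⟨γ, K, fun y hy => ?_⟩
  have hfiber := sum_normLE_mul H.tendsto hone 1 (fun t => t⁻¹) y
  simp only [Pi.one_apply, one_mul, mul_comm (normFiberSum _ _ _)] at hfiber
  rw [hfiber]
  exact hK y hy

theorem sum_powerset_neg_one_pow_card_mul_log_div (H : NormCount N κ τ C) (hx : x ≠ 0)
    (V : Finset P) :
    ∑ T ∈ V.powerset, (-1 : ℝ) ^ #T * log (x / Nm N (primeProd T))
      = log x * (if V = ∅ then 1 else 0)
        - ∑ T ∈ V.powerset, (-1 : ℝ) ^ #T * ∑ q ∈ T, log (N q) := by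
  rw [← sum_powerset_neg_one_pow_card_real, mul_sum, ← sum_sub_distrib]
  refine sum_congr rfl fun T _ => ?_
  rw [log_div hx (by linarith [H.one_le_Nm_cast (primeProd T)]), log_Nm_primeProd H.one_le]
  ring

theorem log_norm_nonneg (H : NormCount N κ τ C) (p : P) : 0 ≤ log (N p) :=
  log_nonneg (by linarith [H.two_le_cast p])

theorem sum_powerset_neg_one_pow_card_mul_log_div_nonneg (H : NormCount N κ τ C) (hx : 1 ≤ x)
    (V : Finset P) :
    0 ≤ ∑ T ∈ V.powerset, (-1 : ℝ) ^ #T * log (x / Nm N (primeProd T)) := by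
  rw [H.sum_powerset_neg_one_pow_card_mul_log_div (by linarith)]
  rcases V.eq_empty_or_nonempty with rfl | ⟨p, hp⟩
  · simpa using log_nonneg hx
  · rw [← insert_erase hp, sum_powerset_insert_neg_one_pow_card_mul_sum _ (notMem_erase p V),
      if_neg (insert_ne_empty _ _), mul_zero, zero_sub, neg_neg]
    exact mul_nonneg (H.log_norm_nonneg p) (by positivity)

theorem sum_powerset_singleton_neg_one_pow_card_mul_log_div (H : NormCount N κ τ C) (hx : x ≠ 0)
    (p : P) :
    ∑ T ∈ ({p} : Finset P).powerset, (-1 : ℝ) ^ #T * log (x / Nm N (primeProd T))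
      = log (N p) := by
  rw [H.sum_powerset_neg_one_pow_card_mul_log_div hx, ← insert_empty_eq,
    sum_powerset_insert_neg_one_pow_card_mul_sum _ (notMem_empty p)]
  simp

theorem sum_neg_one_pow_card_mul_sum_add_primeProd (H : NormCount N κ τ C) (hx : 1 ≤ x)
    (F : (P →₀ ℕ) → ℝ) :
    ∑ T ∈ normLE (Nm N ∘ primeProd) x, (-1 : ℝ) ^ #T *
      ∑ m ∈ normLE (Nm N) (x / Nm N (primeProd T)), F (m + primeProd T) = F 0 := by
  have hconv := sum_normLE_mul_sum_powerset H.one_le H.tendsto one_ne_zero x F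
    fun T => (-1 : ℝ) ^ #T
  simp only [filter_one_le_support, sum_powerset_neg_one_pow_card_real, pow_one, one_smul] at hconv
  rw [← hconv, sum_eq_single 0]
  · simp
  · exact fun n _ hn => by rw [if_neg (by simpa using hn), mul_zero]
  · exact fun h => absurd ((mem_normLE H.tendsto).2 (by simpa [Nm_zero] using hx)) h

theorem sum_log_norm_le_sum_neg_one_pow_card (H : NormCount N κ τ C) (hx : 1 ≤ x) :
    ∑ p ∈ normLE N x, log (N p) ≤ ∑ T ∈ normLE (Nm N ∘ primeProd) x,
      (-1 : ℝ) ^ #T * log (x / Nm N (primeProd T))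
        * #(normLE (Nm N) (x / Nm N (primeProd T))) := by
  have hx0 : x ≠ 0 := by linarith
  have hinj : Function.Injective fun p : P => Finsupp.single p 1 :=
    Finsupp.single_left_injective one_ne_zero
  have hconv := sum_normLE_mul_sum_powerset H.one_le H.tendsto one_ne_zero x (fun _ => 1)
    fun T => (-1 : ℝ) ^ #T * log (x / Nm N (primeProd T))
  simp only [filter_one_le_support, one_mul, pow_one, sum_const, nsmul_one] at hconv
  rw [← hconv]
  calc ∑ p ∈ normLE N x, log (N p)
      = ∑ n ∈ (normLE N x).map ⟨_, hinj⟩,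
          ∑ T ∈ n.support.powerset, (-1 : ℝ) ^ #T * log (x / Nm N (primeProd T)) := by
        rw [sum_map]
        refine sum_congr rfl fun p _ => ?_
        rw [Function.Embedding.coeFn_mk, Finsupp.support_single p one_ne_zero,
          H.sum_powerset_singleton_neg_one_pow_card_mul_log_div hx0]
    _ ≤ _ := by
        refine sum_le_sum_of_subset_of_nonneg (fun n hn => ?_) fun n _ _ =>
          H.sum_powerset_neg_one_pow_card_mul_log_div_nonneg hx _
        obtain ⟨p, hp, rfl⟩ := mem_map.1 hn
        rw [mem_normLE H.linearGrowth_prime.tendsto] at hp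
        simpa [mem_normLE H.tendsto, Nm_single] using hp

theorem exists_abs_card_mul_log_sub_le (H : NormCount N κ τ C) {σ : ℝ} (hσ : τ < σ) :
    ∃ γ K, 0 ≤ K ∧ ∀ y : ℝ, 1 ≤ y → |#(normLE (Nm N) y) * log y
      - (y * ∑ m ∈ normLE (Nm N) y, (Nm N m : ℝ)⁻¹ - γ * #(normLE (Nm N) y))| ≤ K * y ^ σ := by
  obtain ⟨γ, K, hK⟩ := H.exists_abs_sum_inv_Nm_sub_log_le
  have hK0 : 0 ≤ K := by simpa using (abs_nonneg _).trans (hK 1 le_rfl)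
  have hκ := H.density_pos
  have hC := H.error_nonneg
  have hε : 0 < σ - τ := sub_pos.2 hσ
  refine ⟨γ / κ, C * ((σ - τ)⁻¹ + |γ / κ|) + K, by positivity, fun y hy => ?_⟩
  have hy0 : 0 < y := by linarith
  set I := (#(normLE (Nm N) y) : ℝ)
  set S := ∑ m ∈ normLE (Nm N) y, (Nm N m : ℝ)⁻¹
  have hsplit : I * log y - (y * S - γ / κ * I)
      = (I - κ * y) * (log y + γ / κ) - y * (S - κ * log y - γ) := by
    field_simp
    ring
  have hpow : y ^ τ ≤ y ^ σ := rpow_le_rpow_of_exponent_le hy hσ.le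
  have hlog : |log y + γ / κ| ≤ ((σ - τ)⁻¹ + |γ / κ|) * y ^ (σ - τ) := by
    have hlog_le := log_le_rpow_div hy0.le hε
    have hge := le_mul_of_one_le_right (abs_nonneg (γ / κ)) (one_le_rpow hy hε.le)
    rw [div_eq_inv_mul] at hlog_le
    refine (abs_add_le _ _).trans ?_
    rw [abs_of_nonneg (log_nonneg hy)]
    linarith
  calc |I * log y - (y * S - γ / κ * I)|
      ≤ |I - κ * y| * |log y + γ / κ| + y * |S - κ * log y - γ| := by
        rw [hsplit, ← abs_mul, ← abs_of_pos hy0, ← abs_mul, abs_of_pos hy0]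
        exact abs_sub _ _
    _ ≤ C * y ^ τ * (((σ - τ)⁻¹ + |γ / κ|) * y ^ (σ - τ)) + y * (K * y ^ (τ - 1)) := by
        gcongr
        · exact H.abs_card_sub_le y hy0
        · exact hK y hy
    _ = C * ((σ - τ)⁻¹ + |γ / κ|) * y ^ σ + K * y ^ τ := by
        rw [rpow_sub hy0, rpow_sub_one hy0.ne']
        field_simp
    _ ≤ _ := by
        rw [add_mul]
        gcongr

theorem sum_neg_one_pow_card_mul_sum_inv_Nm (H : NormCount N κ τ C) (hx : 1 ≤ x) (γ : ℝ) :
    ∑ T ∈ normLE (Nm N ∘ primeProd) x, (-1 : ℝ) ^ #T *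
      (x / Nm N (primeProd T) * ∑ m ∈ normLE (Nm N) (x / Nm N (primeProd T)), (Nm N m : ℝ)⁻¹
        - γ * #(normLE (Nm N) (x / Nm N (primeProd T)))) = x - γ := by
  rw [show x - γ = x / Nm N 0 - γ by rw [Nm_zero, Nat.cast_one, div_one],
    ← H.sum_neg_one_pow_card_mul_sum_add_primeProd hx fun n => x / Nm N n - γ]
  refine sum_congr rfl fun T _ => congrArg _ ?_
  rw [sum_sub_distrib, sum_const, nsmul_eq_mul, mul_sum, mul_comm γ]
  congr 1
  refine sum_congr rfl fun m _ => ?_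
  rw [Nm_add, Nat.cast_mul]
  field_simp

theorem exists_linearGrowth_log (H : NormCount N κ τ C) :
    ∃ B, LinearGrowth N (fun p => log (N p)) B := by
  obtain ⟨σ, hτσ, hσ⟩ := exists_between H.lt_one
  obtain ⟨γ, K, hK0, hK⟩ := H.exists_abs_card_mul_log_sub_le hτσ
  obtain ⟨B, -, hB⟩ := H.linearGrowth_primeProd.exists_sum_mul_div_rpow_le
    (H.exponent_pos.trans hτσ) hσ
  simp only [Pi.one_apply, one_mul, Function.comp_apply] at hB
  refine ⟨1 + |γ| + K * B, H.linearGrowth_prime.tendsto, H.one_le, H.log_norm_nonneg,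
    fun x hx => ?_⟩
  have hx0 : 0 < x := by linarith
  set I : ℝ → ℝ := fun y => #(normLE (Nm N) y)
  set S : ℝ → ℝ := fun y => ∑ m ∈ normLE (Nm N) y, (Nm N m : ℝ)⁻¹
  have hterm : ∀ T ∈ normLE (Nm N ∘ primeProd) x,
      (-1 : ℝ) ^ #T * log (x / Nm N (primeProd T)) * I (x / Nm N (primeProd T))
        ≤ (-1 : ℝ) ^ #T * (x / Nm N (primeProd T) * S (x / Nm N (primeProd T))
            - γ * I (x / Nm N (primeProd T))) + K * (x / Nm N (primeProd T)) ^ σ := by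
    intro T hT
    rw [mem_normLE H.linearGrowth_primeProd.tendsto, Function.comp_apply] at hT
    have hy := hK _ ((one_le_div (by linarith [H.one_le_Nm_cast (primeProd T)])).2 hT)
    rw [← sub_le_iff_le_add', mul_assoc, ← mul_sub, mul_comm (log _)]
    refine ((le_abs_self _).trans_eq ?_).trans hy
    rw [abs_mul, abs_pow, abs_neg, abs_one, one_pow, one_mul]
  calc ∑ p ∈ normLE N x, log (N p)
      ≤ _ := (H.sum_log_norm_le_sum_neg_one_pow_card hx).trans (sum_le_sum hterm)
    _ = x - γ + K * ∑ T ∈ normLE (Nm N ∘ primeProd) x, (x / Nm N (primeProd T)) ^ σ := by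
        rw [sum_add_distrib, H.sum_neg_one_pow_card_mul_sum_inv_Nm hx, mul_sum]
    _ ≤ x + |γ| * x + K * (B * x) := by
        have hγ := le_mul_of_one_le_right (abs_nonneg γ) hx
        gcongr
        · linarith [neg_abs_le γ]
        · exact hB x hx0
    _ = _ := by ring

end NormCount

end Chebyshev

section Mertens

open Real Finset

variable {P : Type*} {N : P → ℕ} {κ τ C x : ℝ}

namespace NormCount

theorem sum_apply_normLE (H : NormCount N κ τ C) (p : P) (x : ℝ) :
    ∑ n ∈ normLE (Nm N) x, (n p : ℝ)
      = ∑ n ∈ normLE (Nm N) (x / N p), (n p : ℝ) + #(normLE (Nm N) (x / N p)) := by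
  have hshift := sum_normLE_filter_le H.one_le H.tendsto x (Finsupp.single p 1)
    fun n => (n p : ℝ)
  rw [Nm_single, pow_one, sum_filter_of_ne fun n _ hn =>
    Finsupp.single_le_iff.2 (Nat.one_le_iff_ne_zero.2 (Nat.cast_ne_zero.1 hn))] at hshift
  simpa [sum_add_distrib] using hshift

theorem sum_apply_normLE_le (H : NormCount N κ τ C) (p : P) (hx : 0 < x) :
    ∑ n ∈ normLE (Nm N) x, (n p : ℝ) ≤ 2 * (κ + C) * x / N p := by
  have hK := H.linearGrowth.const_nonneg
  have hp := H.two_le_cast p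
  obtain ⟨k, hk⟩ := pow_unbounded_of_one_lt x one_lt_two
  induction k generalizing x with
  | zero =>
    rw [H.normLE_eq_empty (by simpa using hk), sum_empty]
    positivity
  | succ k ih =>
    have hxp : x / N p ≤ x / 2 := by gcongr
    calc ∑ n ∈ normLE (Nm N) x, (n p : ℝ)
        = ∑ n ∈ normLE (Nm N) (x / N p), (n p : ℝ) + #(normLE (Nm N) (x / N p)) :=
          H.sum_apply_normLE p x
      _ ≤ 2 * (κ + C) * (x / N p) / N p + (κ + C) * (x / N p) :=
          add_le_add (ih (by positivity) (by rw [pow_succ] at hk; linarith))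
            (H.card_normLE_le (by positivity))
      _ ≤ 2 * (κ + C) * (x / N p) / 2 + (κ + C) * (x / N p) := by gcongr
      _ = 2 * (κ + C) * x / N p := by ring

theorem abs_sum_apply_normLE_sub_le (H : NormCount N κ τ C) (p : P) (hx : 0 < x) :
    |∑ n ∈ normLE (Nm N) x, (n p : ℝ) - κ * (x / N p)|
      ≤ 2 * (κ + C) * (x / N p) / N p + C * (x / N p) ^ τ := by
  have hp := H.two_le_cast p
  have hxp : 0 < x / N p := by positivity
  rw [H.sum_apply_normLE, add_sub_assoc]
  refine (abs_add_le _ _).trans (add_le_add ?_ (H.abs_card_sub_le _ hxp))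
  rw [abs_of_nonneg (sum_nonneg fun n _ => Nat.cast_nonneg _)]
  exact H.sum_apply_normLE_le p hxp

theorem sum_log_Nm (H : NormCount N κ τ C) (x : ℝ) :
    ∑ n ∈ normLE (Nm N) x, log (Nm N n)
      = ∑ p ∈ normLE N x, log (N p) * ∑ n ∈ normLE (Nm N) x, (n p : ℝ) := by
  have hsupp : ∀ n ∈ normLE (Nm N) x, n.support ⊆ normLE N x := fun n hn p hp => by
    rw [mem_normLE H.tendsto] at hn
    rw [mem_normLE H.linearGrowth_prime.tendsto]
    exact (Nat.cast_le.2 (le_Nm_of_ne_zero H.one_le (Finsupp.mem_support_iff.1 hp))).trans hn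
  rw [sum_congr rfl fun n hn => log_Nm H.one_le (hsupp n hn), sum_comm]
  simp only [mul_sum]

theorem exists_sum_log_div_Nm_le (H : NormCount N κ τ C) :
    ∃ K, ∀ x : ℝ, 0 < x → ∑ n ∈ normLE (Nm N) x, log (x / Nm N n) ≤ K * x := by
  obtain ⟨K, -, hK⟩ := H.linearGrowth.exists_sum_mul_div_rpow_le (τ := 1 / 2)
    (by norm_num) (by norm_num)
  refine ⟨2 * K, fun x hx => ?_⟩
  calc ∑ n ∈ normLE (Nm N) x, log (x / Nm N n)
      ≤ ∑ n ∈ normLE (Nm N) x, 2 * (1 * (x / Nm N n) ^ (1 / 2 : ℝ)) := by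
        refine sum_le_sum fun n _ => ?_
        have := log_le_rpow_div (x := x / Nm N n) (by positivity) (half_pos one_pos)
        linarith
    _ ≤ 2 * K * x := by
        rw [← mul_sum, mul_assoc]
        exact mul_le_mul_of_nonneg_left (hK x hx) zero_le_two

theorem abs_card_mul_log_sub_le (H : NormCount N κ τ C) (hx : 1 ≤ x) :
    |#(normLE (Nm N) x) * log x - κ * x * log x| ≤ C / (1 - τ) * x := by
  have hx0 : 0 < x := by linarith
  have hlog := log_le_rpow_div hx0.le (sub_pos.2 H.lt_one)
  have hC := H.error_nonneg
  calc |#(normLE (Nm N) x) * log x - κ * x * log x|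
      = |#(normLE (Nm N) x) - κ * x| * log x := by
        rw [← sub_mul, abs_mul, abs_of_nonneg (log_nonneg hx)]
    _ ≤ C * x ^ τ * (x ^ (1 - τ) / (1 - τ)) := by
        gcongr
        · exact log_nonneg hx
        · exact H.abs_card_sub_le x hx0
    _ = C / (1 - τ) * x := by
        rw [rpow_sub hx0, rpow_one]
        field_simp

theorem exists_abs_sum_log_Nm_sub_le (H : NormCount N κ τ C) :
    ∃ K, ∀ x : ℝ, 1 ≤ x → |∑ n ∈ normLE (Nm N) x, log (Nm N n) - κ * x * log x| ≤ K * x := by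
  obtain ⟨K, hK⟩ := H.exists_sum_log_div_Nm_le
  refine ⟨C / (1 - τ) + K, fun x hx => ?_⟩
  have hcard := H.abs_card_mul_log_sub_le hx
  have hnonneg : 0 ≤ ∑ n ∈ normLE (Nm N) x, log (x / Nm N n) := by
    refine sum_nonneg fun n hn => log_nonneg ?_
    rw [mem_normLE H.tendsto] at hn
    rwa [one_le_div (by linarith [H.one_le_Nm_cast n])]
  have hlog : ∑ n ∈ normLE (Nm N) x, log (Nm N n)
      = #(normLE (Nm N) x) * log x - ∑ n ∈ normLE (Nm N) x, log (x / Nm N n) := by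
    rw [← nsmul_eq_mul, ← sum_const, ← sum_sub_distrib]
    refine sum_congr rfl fun n _ => ?_
    rw [log_div (by linarith) (by linarith [H.one_le_Nm_cast n]), sub_sub_cancel]
  rw [abs_le] at hcard ⊢
  rw [hlog]
  constructor <;> linarith [hK x (by linarith)]

theorem exists_abs_sum_log_mul_sum_apply_sub_le (H : NormCount N κ τ C) :
    ∃ K, ∀ x : ℝ, 1 ≤ x → |∑ p ∈ normLE N x, log (N p) * ∑ n ∈ normLE (Nm N) x, (n p : ℝ)
      - κ * x * ∑ p ∈ normLE N x, log (N p) / N p| ≤ K * x := by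
  obtain ⟨B, hlin⟩ := H.exists_linearGrowth_log
  obtain ⟨K, -, hK⟩ := hlin.exists_sum_mul_div_rpow_le H.exponent_pos H.lt_one
  have hsum := hlin.summable_mul_rpow_neg one_lt_two
  have hK' := H.linearGrowth.const_nonneg
  have hC := H.error_nonneg
  refine ⟨2 * (κ + C) * ∑' p, log (N p) * (N p : ℝ) ^ (-2 : ℝ) + C * K, fun x hx => ?_⟩
  have hx0 : 0 < x := by linarith
  rw [mul_sum, ← sum_sub_distrib]
  calc |∑ p ∈ normLE N x, (log (N p) * ∑ n ∈ normLE (Nm N) x, (n p : ℝ)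
          - κ * x * (log (N p) / N p))|
      ≤ ∑ p ∈ normLE N x, (2 * (κ + C) * x * (log (N p) * (N p : ℝ) ^ (-2 : ℝ))
          + C * (log (N p) * (x / N p) ^ τ)) := by
        refine (abs_sum_le_sum_abs _ _).trans (sum_le_sum fun p _ => ?_)
        have hfactor : log (N p) * ∑ n ∈ normLE (Nm N) x, (n p : ℝ) - κ * x * (log (N p) / N p)
            = log (N p) * (∑ n ∈ normLE (Nm N) x, (n p : ℝ) - κ * (x / N p)) := by ring
        rw [hfactor, abs_mul, abs_of_nonneg (H.log_norm_nonneg p), rpow_neg (Nat.cast_nonneg _),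
          rpow_two]
        refine (mul_le_mul_of_nonneg_left (H.abs_sum_apply_normLE_sub_le p hx0)
          (H.log_norm_nonneg p)).trans_eq ?_
        ring
    _ = 2 * (κ + C) * x * ∑ p ∈ normLE N x, log (N p) * (N p : ℝ) ^ (-2 : ℝ)
          + C * ∑ p ∈ normLE N x, log (N p) * (x / N p) ^ τ := by
        rw [sum_add_distrib, mul_sum, mul_sum]
    _ ≤ 2 * (κ + C) * x * ∑' p, log (N p) * (N p : ℝ) ^ (-2 : ℝ) + C * (K * x) := by
        gcongr
        · exact hsum.sum_le_tsum _ fun p _ =>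
            mul_nonneg (H.log_norm_nonneg p) (rpow_nonneg (Nat.cast_nonneg _) _)
        · exact hK x hx0
    _ = _ := by ring

theorem exists_abs_sum_log_div_sub_log_le (H : NormCount N κ τ C) :
    ∃ B, ∀ x : ℝ, 1 ≤ x → |∑ p ∈ normLE N x, log (N p) / N p - log x| ≤ B := by
  obtain ⟨K₁, hK₁⟩ := H.exists_abs_sum_log_Nm_sub_le
  obtain ⟨K₂, hK₂⟩ := H.exists_abs_sum_log_mul_sum_apply_sub_le
  refine ⟨(K₁ + K₂) / κ, fun x hx => ?_⟩
  have hκx : 0 < κ * x := mul_pos H.density_pos (by linarith)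
  have hsum := hK₂ x hx
  rw [← H.sum_log_Nm, abs_sub_comm] at hsum
  refine le_of_mul_le_mul_left ?_ hκx
  calc κ * x * |∑ p ∈ normLE N x, log (N p) / N p - log x|
      = |κ * x * ∑ p ∈ normLE N x, log (N p) / N p - κ * x * log x| := by
        rw [← mul_sub, abs_mul, abs_of_pos hκx]
    _ ≤ K₂ * x + K₁ * x :=
        (abs_sub_le _ (∑ n ∈ normLE (Nm N) x, log (Nm N n)) _).trans (add_le_add hsum (hK₁ x hx))
    _ = κ * x * ((K₁ + K₂) / κ) := by
        field_simp [H.density_pos.ne']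
        ring

end NormCount

end Mertens

section DivisibilityDensity

open Real Finset

variable {P : Type*} {N : P → ℕ} {κ τ C D a y : ℝ} {h : ℕ} {p : P} {A : (P →₀ ℕ) → Prop}

theorem rpow_div_le_half {Q : ℝ} (hτ : 1 / 2 ≤ τ) (hQ : 4 ≤ Q) (hy : 0 < y) :
    (y / Q) ^ τ ≤ y ^ τ / 2 := by
  have hsqrt : (2 : ℝ) = 4 ^ (1 / 2 : ℝ) := by
    rw [← sqrt_eq_rpow, show (4 : ℝ) = 2 ^ 2 by norm_num, sqrt_sq zero_le_two]
  have hpow : (2 : ℝ) ≤ 4 ^ τ := hsqrt.trans_le (rpow_le_rpow_of_exponent_le (by norm_num) hτ)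
  calc (y / Q) ^ τ ≤ (y / 4) ^ τ := by gcongr
    _ = y ^ τ / 4 ^ τ := div_rpow hy.le (by norm_num) τ
    _ ≤ y ^ τ / 2 := by gcongr

theorem abs_le_two_mul_rpow_of_abs_sub_comp_div_le {E : ℝ → ℝ} {Q : ℝ} (hτ : 1 / 2 ≤ τ)
    (hQ : 4 ≤ Q) (hD : 0 ≤ D) (hsmall : ∀ y, 0 < y → y < 1 → |E y| ≤ 2 * D * y ^ τ)
    (hstep : ∀ y, 0 < y → |E y - E (y / Q)| ≤ D * y ^ τ) (hy : 0 < y) :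
    |E y| ≤ 2 * D * y ^ τ := by
  have hbound : ∀ k : ℕ, ∀ y : ℝ, 0 < y → y < 2 ^ k → |E y| ≤ 2 * D * y ^ τ := by
    intro k
    induction k with
    | zero => exact fun y hy0 hy1 => hsmall y hy0 (by simpa using hy1)
    | succ k ih =>
      intro y hy0 hyk
      have hdiv : y / Q ≤ y / 4 := by gcongr
      have hrec := ih (y / Q) (by positivity) (by rw [pow_succ] at hyk; linarith)
      have hhalf : 2 * D * (y / Q) ^ τ ≤ 2 * D * (y ^ τ / 2) := by
        gcongr
        exact rpow_div_le_half hτ hQ hy0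
      have htri := abs_sub_abs_le_abs_sub (E y) (E (y / Q))
      linarith [hstep y hy0]
  obtain ⟨k, hk⟩ := pow_unbounded_of_one_lt y one_lt_two
  exact hbound k y hy hk

/-- The number of elements of norm at most `y` with the property `R`, as a real number. -/
def countLE (N : P → ℕ) (R : (P →₀ ℕ) → Prop) (y : ℝ) : ℝ :=
  #{m ∈ normLE (Nm N) y | R m}

theorem countLE_eq_sum (N : P → ℕ) (R : (P →₀ ℕ) → Prop) (y : ℝ) :
    countLE N R y = ∑ m ∈ normLE (Nm N) y, if R m then 1 else 0 := by
  rw [countLE, sum_boole]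

theorem countLE_congr (N : P → ℕ) {R S : (P →₀ ℕ) → Prop} (hRS : ∀ m, R m ↔ S m) (y : ℝ) :
    countLE N R y = countLE N S y :=
  congrArg (countLE N · y) (funext fun m => propext (hRS m))

theorem countLE_and_add_countLE_and_not (N : P → ℕ) (R S : (P →₀ ℕ) → Prop) (y : ℝ) :
    countLE N (fun m => R m ∧ S m) y + countLE N (fun m => R m ∧ ¬ S m) y = countLE N R y := by
  simp only [countLE_eq_sum, ← sum_add_distrib]
  refine sum_congr rfl fun m _ => ?_
  by_cases hR : R m <;> by_cases hS : S m <;> simp [hR, hS]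

/-- The density, among the `h`-free elements, of those divisible by the prime element `p`. -/
def primeDensity (N : P → ℕ) (h : ℕ) (p : P) : ℝ :=
  ((N p : ℝ) ^ (h - 1) - 1) / ((N p : ℝ) ^ h - 1)

theorem primeDensity_eq_inv_sub (hp : 2 ≤ N p) (hh : h ≠ 0) :
    primeDensity N h p = (N p : ℝ)⁻¹ - (1 - primeDensity N h p) / (N p : ℝ) ^ h := by
  have hq : (1 : ℝ) < N p := mod_cast hp
  obtain ⟨j, rfl⟩ := Nat.exists_eq_succ_of_ne_zero hh
  have hden : (N p : ℝ) ^ (j + 1) - 1 ≠ 0 := (sub_pos.2 (one_lt_pow₀ hq hh)).ne'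
  rw [primeDensity, Nat.succ_eq_add_one, Nat.add_sub_cancel]
  field_simp
  ring

theorem primeDensity_nonneg (hp : 1 ≤ N p) (h : ℕ) : 0 ≤ primeDensity N h p := by
  have hq : (1 : ℝ) ≤ N p := mod_cast hp
  exact div_nonneg (sub_nonneg.2 (one_le_pow₀ hq)) (sub_nonneg.2 (one_le_pow₀ hq))

theorem primeDensity_le_one (hp : 1 ≤ N p) (h : ℕ) : primeDensity N h p ≤ 1 := by
  have hq : (1 : ℝ) ≤ N p := mod_cast hp
  refine div_le_one_of_le₀ ?_ (sub_nonneg.2 (one_le_pow₀ hq))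
  exact sub_le_sub_right (pow_le_pow_right₀ hq (Nat.sub_le h 1)) 1

namespace NormCount

theorem countLE_eq_zero (H : NormCount N κ τ C) (R : (P →₀ ℕ) → Prop) (hy : y < 1) :
    countLE N R y = 0 := by
  rw [countLE, H.normLE_eq_empty hy, filter_empty, card_empty, Nat.cast_zero]

theorem countLE_eq_countLE_add (H : NormCount N κ τ C) {R : (P →₀ ℕ) → Prop} {d : P →₀ ℕ}
    (hR : ∀ m, R m → d ≤ m) (y : ℝ) :
    countLE N R y = countLE N (fun m => R (m + d)) (y / Nm N d) := by
  rw [countLE_eq_sum, countLE_eq_sum,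
    ← sum_normLE_filter_le H.one_le H.tendsto y d fun n => if R n then 1 else 0, sum_filter]
  refine sum_congr rfl fun n _ => ?_
  by_cases hn : R n
  · rw [if_pos hn, if_pos (hR n hn)]
  · rw [if_neg hn, ite_self]

/- The elements with `1 ≤ m p ≤ h` are the shifts by `p` of those with `m p < h`, and among them
those with `m p = h` are the shifts by `h • p` of those with `m p = 0`. -/
theorem countLE_lt_and_one_le (H : NormCount N κ τ C) (hh : h ≠ 0)
    (hA : ∀ m k, A (m + Finsupp.single p k) ↔ A m) (y : ℝ) :
    countLE N (fun m => A m ∧ m p < h ∧ 1 ≤ m p) y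
      = countLE N (fun m => A m ∧ m p < h) (y / N p)
        - countLE N (fun m => A m ∧ m p = 0) (y / (N p : ℝ) ^ h) := by
  have hsplit :=
    countLE_and_add_countLE_and_not N (fun m => A m ∧ m p ≤ h ∧ 1 ≤ m p) (fun m => m p < h) y
  have hlt := countLE_congr N (R := fun m => (A m ∧ m p ≤ h ∧ 1 ≤ m p) ∧ m p < h)
    (S := fun m => A m ∧ m p < h ∧ 1 ≤ m p) (fun m => by grind) y
  have hone : countLE N (fun m => A m ∧ m p ≤ h ∧ 1 ≤ m p) y
      = countLE N (fun m => A m ∧ m p < h) (y / N p) := by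
    rw [H.countLE_eq_countLE_add (d := Finsupp.single p 1)
      (fun m hm => Finsupp.single_le_iff.2 hm.2.2), Nm_single, pow_one]
    exact countLE_congr N (fun m => by simp [hA]) _
  have htop : countLE N (fun m => (A m ∧ m p ≤ h ∧ 1 ≤ m p) ∧ ¬ m p < h) y
      = countLE N (fun m => A m ∧ m p = 0) (y / (N p : ℝ) ^ h) := by
    rw [H.countLE_eq_countLE_add (d := Finsupp.single p h)
      (fun m hm => Finsupp.single_le_iff.2 (not_lt.1 hm.2)), Nm_single, Nat.cast_pow]
    refine countLE_congr N (fun m => ?_) _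
    simp only [hA, Finsupp.add_apply, Finsupp.single_eq_same]
    grind
  linarith

theorem countLE_eq_zero_sub_comp_div (H : NormCount N κ τ C) (hh : h ≠ 0)
    (hA : ∀ m k, A (m + Finsupp.single p k) ↔ A m) (y : ℝ) :
    countLE N (fun m => A m ∧ m p = 0) y
        - countLE N (fun m => A m ∧ m p = 0) (y / (N p : ℝ) ^ h)
      = countLE N (fun m => A m ∧ m p < h) y - countLE N (fun m => A m ∧ m p < h) (y / N p) := by
  have hsplit := countLE_and_add_countLE_and_not N (fun m => A m ∧ m p < h) (fun m => 1 ≤ m p) y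
  have hpos := countLE_congr N (R := fun m => (A m ∧ m p < h) ∧ 1 ≤ m p)
    (S := fun m => A m ∧ m p < h ∧ 1 ≤ m p) (fun m => and_assoc) y
  have hzero := countLE_congr N (R := fun m => (A m ∧ m p < h) ∧ ¬ 1 ≤ m p)
    (S := fun m => A m ∧ m p = 0) (fun m => by grind) y
  linarith [H.countLE_lt_and_one_le hh hA y]

theorem four_le_pow (H : NormCount N κ τ C) (hh : 2 ≤ h) (p : P) : 4 ≤ (N p : ℝ) ^ h :=
  calc (4 : ℝ) = 2 ^ 2 := by norm_num
    _ ≤ (N p : ℝ) ^ 2 := by gcongr; exact H.two_le_cast p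
    _ ≤ (N p : ℝ) ^ h := pow_le_pow_right₀ (by linarith [H.two_le_cast p]) hh

theorem abs_countLE_eq_zero_sub_le (H : NormCount N κ τ C) (hh : 2 ≤ h)
    (hA : ∀ m k, A (m + Finsupp.single p k) ↔ A m)
    (hcount : ∀ y : ℝ, 0 < y → |countLE N (fun m => A m ∧ m p < h) y - a * y| ≤ D * y ^ τ)
    (hD : 0 ≤ D) (hy : 0 < y) :
    |countLE N (fun m => A m ∧ m p = 0) y - a * (1 - primeDensity N h p) * y|
      ≤ 4 * D * y ^ τ := by
  have hq := H.two_le_cast p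
  set u := 1 - primeDensity N h p
  have hu0 : 0 ≤ u := sub_nonneg.2 (primeDensity_le_one (H.one_le p) h)
  have hu1 : u ≤ 1 := sub_le_self _ (primeDensity_nonneg (H.one_le p) h)
  have hself : u = 1 - (N p : ℝ)⁻¹ + u / (N p : ℝ) ^ h := by
    linarith [primeDensity_eq_inv_sub (H.two_le p) (show h ≠ 0 by lia)]
  rw [show 4 * D = 2 * (2 * D) by ring]
  refine abs_le_two_mul_rpow_of_abs_sub_comp_div_le
    (E := fun y => countLE N (fun m => A m ∧ m p = 0) y - a * u * y) H.half_lt.le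
    (H.four_le_pow hh p) (by positivity) (fun y hy0 hy1 => ?_) (fun y hy0 => ?_) hy
  · have hay := hcount y hy0
    rw [H.countLE_eq_zero _ hy1, zero_sub, abs_neg] at hay ⊢
    rw [mul_right_comm, abs_mul, abs_of_nonneg hu0]
    have hmul : |a * y| * u ≤ |a * y| := mul_le_of_le_one_right (abs_nonneg _) hu1
    linarith [mul_nonneg hD (rpow_nonneg hy0.le τ)]
  · have hdiff := H.countLE_eq_zero_sub_comp_div (show h ≠ 0 by lia) hA y
    have hpow : D * (y / N p) ^ τ ≤ D * y ^ τ := by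
      have := H.exponent_pos
      gcongr
      exact div_le_self hy0.le (by linarith)
    rw [show countLE N (fun m => A m ∧ m p = 0) y - a * u * y
        - (countLE N (fun m => A m ∧ m p = 0) (y / (N p : ℝ) ^ h) - a * u * (y / (N p : ℝ) ^ h))
        = (countLE N (fun m => A m ∧ m p < h) y - a * y)
          - (countLE N (fun m => A m ∧ m p < h) (y / N p) - a * (y / N p)) by
      linear_combination hdiff - a * y * hself]
    linarith [abs_sub (countLE N (fun m => A m ∧ m p < h) y - a * y)
      (countLE N (fun m => A m ∧ m p < h) (y / N p) - a * (y / N p)), hcount y hy0,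
      hcount (y / N p) (by positivity)]

theorem abs_countLE_lt_and_one_le_sub_le (H : NormCount N κ τ C) (hh : 2 ≤ h)
    (hA : ∀ m k, A (m + Finsupp.single p k) ↔ A m)
    (hcount : ∀ y : ℝ, 0 < y → |countLE N (fun m => A m ∧ m p < h) y - a * y| ≤ D * y ^ τ)
    (hy : 0 < y) :
    |countLE N (fun m => A m ∧ m p < h ∧ 1 ≤ m p) y - a * primeDensity N h p * y|
      ≤ 5 * D * (y / N p) ^ τ := by
  have hq := H.two_le_cast p
  have hD : 0 ≤ D := by simpa using (abs_nonneg _).trans (hcount 1 one_pos)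
  have hh0 : h ≠ 0 := by lia
  have hpow : 4 * D * (y / (N p : ℝ) ^ h) ^ τ ≤ 4 * D * (y / N p) ^ τ := by
    have := H.exponent_pos
    gcongr
    exact le_self_pow₀ (by linarith) hh0
  rw [H.countLE_lt_and_one_le hh0 hA y]
  set u := 1 - primeDensity N h p
  rw [show countLE N (fun m => A m ∧ m p < h) (y / N p)
      - countLE N (fun m => A m ∧ m p = 0) (y / (N p : ℝ) ^ h) - a * primeDensity N h p * y
      = (countLE N (fun m => A m ∧ m p < h) (y / N p) - a * (y / N p))
        - (countLE N (fun m => A m ∧ m p = 0) (y / (N p : ℝ) ^ h)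
          - a * u * (y / (N p : ℝ) ^ h)) by
    linear_combination -(a * y) * primeDensity_eq_inv_sub (H.two_le p) hh0]
  refine (abs_sub _ _).trans ?_
  linarith [hcount (y / N p) (by positivity),
    H.abs_countLE_eq_zero_sub_le hh hA hcount hD (show 0 < y / (N p : ℝ) ^ h by positivity)]

end NormCount

end DivisibilityDensity

section HFreeCount

open Real Finset

variable {P : Type*} {N : P → ℕ} {κ τ C D a x y : ℝ} {h : ℕ} {p q : P} {A : (P →₀ ℕ) → Prop}

theorem hFree_iff_filter_eq_empty (hh : h ≠ 0) (m : P →₀ ℕ) :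
    HFree h m ↔ {p ∈ m.support | h ≤ m p} = ∅ := by
  rw [filter_eq_empty_iff]
  refine ⟨fun hm p _ => ?_, fun hm p => ?_⟩
  · have := hm p
    lia
  · by_contra hc
    exact hm (x := p) (Finsupp.mem_support_iff.2 (by lia)) (by lia)

theorem hFree_iff_forall_ne_and_lt (hh : h ≠ 0) (p : P) (m : P →₀ ℕ) :
    HFree h m ↔ (∀ q, q ≠ p → m q ≤ h - 1) ∧ m p < h := by
  refine ⟨fun hm => ⟨fun q _ => hm q, ?_⟩, fun hm q => ?_⟩
  · have := hm p
    lia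
  · rcases eq_or_ne q p with rfl | hq
    · have := hm.2
      lia
    · exact hm.1 q hq

theorem add_single_apply_of_ne (hq : q ≠ p) (m : P →₀ ℕ) (k : ℕ) :
    (m + Finsupp.single p k) q = m q := by
  rw [Finsupp.add_apply, Finsupp.single_eq_of_ne hq, add_zero]

namespace NormCount

theorem summable_inv_Nm_pow (H : NormCount N κ τ C) (hh : 2 ≤ h) :
    Summable fun m : P →₀ ℕ => 1 / (Nm N m : ℝ) ^ h := by
  refine (H.linearGrowth.summable_mul_rpow_neg (show (1 : ℝ) < h by exact_mod_cast hh)).congr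
    fun m => ?_
  rw [Pi.one_apply, one_mul, rpow_neg (Nat.cast_nonneg _), rpow_natCast, one_div]

theorem summable_neg_one_pow_card_div (H : NormCount N κ τ C) (hh : 2 ≤ h) :
    Summable fun T : Finset P => (-1 : ℝ) ^ #T / (Nm N (primeProd T) : ℝ) ^ h := by
  refine Summable.of_norm (((H.summable_inv_Nm_pow hh).comp_injective primeProd_injective).congr
    fun T => ?_)
  rw [Function.comp_apply, norm_div, norm_pow, norm_neg, norm_one, one_pow,
    norm_of_nonneg (by positivity)]

theorem sum_inv_pow_le_zetaM (H : NormCount N κ τ C) (hh : 2 ≤ h) (x : ℝ) :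
    ∑ m ∈ normLE (Nm N) x, 1 / (Nm N m : ℝ) ^ h ≤ zetaM N h := by
  simp only [zetaM, rpow_natCast]
  exact (H.summable_inv_Nm_pow hh).sum_le_tsum _ fun _ _ => by positivity

theorem tendsto_sum_inv_pow_zetaM (H : NormCount N κ τ C) (hh : 2 ≤ h) :
    Tendsto (fun x => ∑ m ∈ normLE (Nm N) x, 1 / (Nm N m : ℝ) ^ h) atTop (𝓝 (zetaM N h)) := by
  simp only [zetaM, rpow_natCast]
  exact (H.summable_inv_Nm_pow hh).hasSum.comp (tendsto_normLE_atTop H.tendsto)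

theorem normLE_div_pow_eq_empty (H : NormCount N κ τ C) (hh : h ≠ 0) {T : Finset P}
    (hT : T ∉ normLE (Nm N ∘ primeProd) x) :
    normLE (Nm N) (x / (Nm N (primeProd T) : ℝ) ^ h) = ∅ := by
  rw [mem_normLE H.linearGrowth_primeProd.tendsto, Function.comp_apply, not_le] at hT
  have hone := H.one_le_Nm_cast (primeProd T)
  refine H.normLE_eq_empty ((div_lt_one (by positivity)).2 ?_)
  exact hT.trans_le (le_self_pow₀ hone hh)

theorem tsum_neg_one_pow_card_div_mul_sum (H : NormCount N κ τ C) (h : ℕ) (hx : 1 ≤ x) :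
    ∑' T : Finset P, (-1 : ℝ) ^ #T / (Nm N (primeProd T) : ℝ) ^ h *
      ∑ m ∈ normLE (Nm N) (x / Nm N (primeProd T)), 1 / (Nm N m : ℝ) ^ h = 1 := by
  rw [tsum_eq_sum (s := normLE (Nm N ∘ primeProd) x) fun T hT => ?_]
  · have hmobius := H.sum_neg_one_pow_card_mul_sum_add_primeProd hx
      fun m => 1 / (Nm N m : ℝ) ^ h
    rw [Nm_zero, Nat.cast_one, one_pow, div_one] at hmobius
    refine (sum_congr rfl fun T _ => ?_).trans hmobius
    rw [div_mul_eq_mul_div, mul_div_assoc, sum_div]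
    congr 1
    exact sum_congr rfl fun m _ => by rw [Nm_add, Nat.cast_mul, mul_pow, div_div]
  · have hempty := H.normLE_div_pow_eq_empty one_ne_zero hT
    rw [pow_one] at hempty
    rw [hempty, sum_empty, mul_zero]

theorem tsum_neg_one_pow_card_div_mul_zetaM (H : NormCount N κ τ C) (hh : 2 ≤ h) :
    (∑' T : Finset P, (-1 : ℝ) ^ #T / (Nm N (primeProd T) : ℝ) ^ h) * zetaM N h = 1 := by
  have hlim : Tendsto (fun x => ∑' T : Finset P, (-1 : ℝ) ^ #T / (Nm N (primeProd T) : ℝ) ^ h *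
      ∑ m ∈ normLE (Nm N) (x / Nm N (primeProd T)), 1 / (Nm N m : ℝ) ^ h) atTop
      (𝓝 (∑' T : Finset P, (-1 : ℝ) ^ #T / (Nm N (primeProd T) : ℝ) ^ h * zetaM N h)) := by
    refine tendsto_tsum_of_dominated_convergence
      ((H.summable_neg_one_pow_card_div hh).norm.mul_right (zetaM N h)) (fun T => ?_)
      (Eventually.of_forall fun x T => ?_)
    · have hT : (0 : ℝ) < Nm N (primeProd T) := zero_lt_one.trans_le (H.one_le_Nm_cast _)
      exact ((H.tendsto_sum_inv_pow_zetaM hh).comp (tendsto_id.atTop_div_const hT)).const_mul _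
    · rw [norm_mul, norm_of_nonneg (sum_nonneg fun _ _ => by positivity)]
      gcongr
      exact H.sum_inv_pow_le_zetaM hh _
  rw [tsum_mul_right] at hlim
  refine tendsto_nhds_unique hlim (tendsto_const_nhds.congr' ?_)
  filter_upwards [eventually_ge_atTop 1] with x hx
  exact (H.tsum_neg_one_pow_card_div_mul_sum h hx).symm

theorem hasSum_countLE_hFree (H : NormCount N κ τ C) (hh : h ≠ 0) (y : ℝ) :
    HasSum (fun T : Finset P =>
      (-1 : ℝ) ^ #T * #(normLE (Nm N) (y / (Nm N (primeProd T) : ℝ) ^ h)))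
      (countLE N (HFree h) y) := by
  have hmobius : countLE N (HFree h) y = ∑ T ∈ normLE (Nm N ∘ primeProd) y,
      (-1 : ℝ) ^ #T * #(normLE (Nm N) (y / (Nm N (primeProd T) : ℝ) ^ h)) := by
    have hsum := sum_normLE_mul_sum_powerset H.one_le H.tendsto hh y (fun _ => 1)
      fun T => (-1 : ℝ) ^ #T
    simp only [sum_powerset_neg_one_pow_card_real, one_mul, sum_const, nsmul_eq_mul, mul_one]
      at hsum
    rw [← hsum, countLE_eq_sum]
    simp only [hFree_iff_filter_eq_empty hh]
  rw [hmobius]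
  refine hasSum_sum_of_ne_finset_zero fun T hT => ?_
  rw [H.normLE_div_pow_eq_empty hh hT, card_empty, Nat.cast_zero, mul_zero]

theorem abs_neg_one_pow_card_mul_sub_le (H : NormCount N κ τ C) (h : ℕ) (hy : 0 < y)
    (T : Finset P) :
    |(-1 : ℝ) ^ #T * #(normLE (Nm N) (y / (Nm N (primeProd T) : ℝ) ^ h))
        - (-1 : ℝ) ^ #T / (Nm N (primeProd T) : ℝ) ^ h * (κ * y)|
      ≤ C * y ^ τ * (Nm N (primeProd T) : ℝ) ^ (-(h * τ)) := by
  have hT := H.one_le_Nm_cast (primeProd T)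
  set n := (Nm N (primeProd T) : ℝ)
  calc |(-1 : ℝ) ^ #T * #(normLE (Nm N) (y / n ^ h)) - (-1 : ℝ) ^ #T / n ^ h * (κ * y)|
      = |(-1 : ℝ) ^ #T * (#(normLE (Nm N) (y / n ^ h)) - κ * (y / n ^ h))| := by ring_nf
    _ = |(#(normLE (Nm N) (y / n ^ h)) : ℝ) - κ * (y / n ^ h)| := by
        rw [abs_mul, abs_pow, abs_neg, abs_one, one_pow, one_mul]
    _ ≤ C * (y / n ^ h) ^ τ := H.abs_card_sub_le _ (by positivity)
    _ = C * y ^ τ * n ^ (-(h * τ)) := by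
        rw [div_rpow hy.le (by positivity), ← rpow_natCast n h, ← rpow_mul (by linarith),
          rpow_neg (by linarith), mul_assoc, div_eq_mul_inv]

theorem exists_abs_countLE_hFree_sub_le (H : NormCount N κ τ C) (hh : 2 ≤ h) :
    ∃ D, ∀ y : ℝ, 0 < y → |countLE N (HFree h) y - κ / zetaM N h * y| ≤ D * y ^ τ := by
  have hexponent : 1 < h * τ := by
    have hh' : (2 : ℝ) ≤ h := mod_cast hh
    nlinarith [H.half_lt]
  have hsummable := H.linearGrowth_primeProd.summable_mul_rpow_neg hexponent
  simp only [Pi.one_apply, one_mul, Function.comp_apply] at hsummable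
  refine ⟨C * ∑' T : Finset P, (Nm N (primeProd T) : ℝ) ^ (-(h * τ)), fun y hy => ?_⟩
  have hzeta := H.tsum_neg_one_pow_card_div_mul_zetaM hh
  have hmain : HasSum (fun T : Finset P =>
      (-1 : ℝ) ^ #T / (Nm N (primeProd T) : ℝ) ^ h * (κ * y)) (κ / zetaM N h * y) := by
    have := (H.summable_neg_one_pow_card_div hh).hasSum.mul_right (κ * y)
    rwa [eq_one_div_of_mul_eq_one_left hzeta, ← mul_assoc, one_div_mul_eq_div] at this
  rw [← ((H.hasSum_countLE_hFree (by lia) y).sub hmain).tsum_eq, ← norm_eq_abs,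
    mul_right_comm, ← tsum_mul_left]
  exact tsum_of_norm_bounded (hsummable.mul_left (C * y ^ τ)).hasSum
    (H.abs_neg_one_pow_card_mul_sub_le h hy)

theorem abs_countLE_hFree_and_one_le_sub_le (H : NormCount N κ τ C) (hh : 2 ≤ h)
    (hA : ∀ m k, A (m + Finsupp.single p k) ↔ A m)
    (hcount : ∀ y : ℝ, 0 < y → |countLE N (fun m => HFree h m ∧ A m) y - a * y| ≤ D * y ^ τ)
    (hy : 0 < y) :
    |countLE N (fun m => HFree h m ∧ A m ∧ 1 ≤ m p) y - a * primeDensity N h p * y|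
      ≤ 5 * D * (y / N p) ^ τ := by
  have hhFree := hFree_iff_forall_ne_and_lt (show h ≠ 0 by lia) p
  have hinv (m : P →₀ ℕ) (k : ℕ) :
      (∀ q, q ≠ p → (m + Finsupp.single p k) q ≤ h - 1) ∧ A (m + Finsupp.single p k)
        ↔ (∀ q, q ≠ p → m q ≤ h - 1) ∧ A m := by
    rw [hA]
    refine and_congr_left' (forall₂_congr fun q hq => ?_)
    rw [add_single_apply_of_ne hq]
  rw [countLE_congr N (S := fun m => ((∀ q, q ≠ p → m q ≤ h - 1) ∧ A m) ∧ m p < h ∧ 1 ≤ m p)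
    fun m => by rw [hhFree]; tauto]
  refine H.abs_countLE_lt_and_one_le_sub_le hh hinv (fun y hy => ?_) hy
  rw [countLE_congr N (S := fun m => HFree h m ∧ A m) fun m => by rw [hhFree]; tauto]
  exact hcount y hy

theorem exists_abs_countLE_hFree_and_prime_sub_le (H : NormCount N κ τ C) (hh : 2 ≤ h) :
    ∃ D, ∀ p, ∀ y : ℝ, 0 < y →
      |countLE N (fun m => HFree h m ∧ 1 ≤ m p) y - κ / zetaM N h * primeDensity N h p * y|
        ≤ D * (y / N p) ^ τ := by
  obtain ⟨D, hD⟩ := H.exists_abs_countLE_hFree_sub_le hh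
  refine ⟨5 * D, fun p y hy => ?_⟩
  simpa only [true_and] using H.abs_countLE_hFree_and_one_le_sub_le (p := p) (A := fun _ => True)
    hh (fun _ _ => Iff.rfl) (by simpa only [and_true] using hD) hy

theorem exists_abs_countLE_hFree_and_prime_and_prime_sub_le (H : NormCount N κ τ C)
    (hh : 2 ≤ h) :
    ∃ D, ∀ p q, p ≠ q → ∀ y : ℝ, 0 < y →
      |countLE N (fun m => HFree h m ∧ 1 ≤ m p ∧ 1 ≤ m q) y
          - κ / zetaM N h * (primeDensity N h p * primeDensity N h q) * y|
        ≤ D * (y / (N p * N q)) ^ τ := by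
  obtain ⟨D, hD⟩ := H.exists_abs_countLE_hFree_and_prime_sub_le hh
  refine ⟨5 * D, fun p q hpq y hy => ?_⟩
  rw [← mul_assoc (κ / zetaM N h)]
  refine (H.abs_countLE_hFree_and_one_le_sub_le (D := D / (N p : ℝ) ^ τ) hh
    (fun m k => by rw [add_single_apply_of_ne hpq]) (fun y hy => ?_) hy).trans_eq ?_
  · refine (hD p y hy).trans_eq ?_
    rw [div_rpow hy.le (Nat.cast_nonneg _)]
    ring
  · rw [mul_comm (N p : ℝ), ← div_div, div_rpow (y := N p) (by positivity) (Nat.cast_nonneg _)]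
    ring

end NormCount

end HFreeCount

section PrimeDensity

open Real Finset

variable {P : Type*} {N : P → ℕ} {κ τ C A x : ℝ} {h : ℕ} {p : P}

theorem inv_sub_primeDensity_eq_div (hp : 2 ≤ N p) (hh : h ≠ 0) :
    (N p : ℝ)⁻¹ - primeDensity N h p
      = ((N p : ℝ) - 1) / ((N p : ℝ) * ((N p : ℝ) ^ h - 1)) := by
  have hq : (1 : ℝ) < N p := mod_cast hp
  obtain ⟨j, rfl⟩ := Nat.exists_eq_succ_of_ne_zero hh
  have hden : (N p : ℝ) ^ (j + 1) - 1 ≠ 0 := (sub_pos.2 (one_lt_pow₀ hq hh)).ne'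
  rw [primeDensity, Nat.succ_eq_add_one, Nat.add_sub_cancel]
  field_simp
  ring

theorem primeDensity_le_inv (hp : 2 ≤ N p) (hh : h ≠ 0) : primeDensity N h p ≤ (N p : ℝ)⁻¹ := by
  have hle := primeDensity_le_one (one_le_two.trans hp) h
  have hdiff : 0 ≤ (1 - primeDensity N h p) / (N p : ℝ) ^ h :=
    div_nonneg (sub_nonneg.2 hle) (by positivity)
  linarith [primeDensity_eq_inv_sub hp hh]

theorem inv_sub_primeDensity_le (hp : 2 ≤ N p) (hh : 2 ≤ h) :
    (N p : ℝ)⁻¹ - primeDensity N h p ≤ 1 / (N p : ℝ) ^ 2 := by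
  have hq : (1 : ℝ) ≤ N p := mod_cast one_le_two.trans hp
  calc (N p : ℝ)⁻¹ - primeDensity N h p = (1 - primeDensity N h p) / (N p : ℝ) ^ h := by
        linarith [primeDensity_eq_inv_sub hp (show h ≠ 0 by lia)]
    _ ≤ 1 / (N p : ℝ) ^ h := by
        gcongr
        linarith [primeDensity_nonneg (one_le_two.trans hp) h]
    _ ≤ 1 / (N p : ℝ) ^ 2 := one_div_le_one_div_of_le (by positivity) (pow_le_pow_right₀ hq hh)

theorem inv_le_two_mul_primeDensity (hp : 2 ≤ N p) (hh : 2 ≤ h) :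
    (N p : ℝ)⁻¹ ≤ 2 * primeDensity N h p := by
  have hq : (2 : ℝ) ≤ N p := mod_cast hp
  have hsq : 1 / (N p : ℝ) ^ 2 ≤ (N p : ℝ)⁻¹ / 2 := by
    rw [inv_eq_one_div, div_div]
    gcongr
    nlinarith
  linarith [inv_sub_primeDensity_le hp hh]

namespace NormCount

theorem summable_inv_sq (H : NormCount N κ τ C) : Summable fun p => 1 / (N p : ℝ) ^ 2 := by
  refine (H.linearGrowth_prime.summable_mul_rpow_neg one_lt_two).congr fun p => ?_
  rw [Pi.one_apply, one_mul, rpow_neg (Nat.cast_nonneg _), rpow_two, one_div]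

theorem summable_log_div_sq (H : NormCount N κ τ C) :
    Summable fun p => log (N p) / (N p : ℝ) ^ 2 := by
  obtain ⟨B, hB⟩ := H.exists_linearGrowth_log
  refine (hB.summable_mul_rpow_neg one_lt_two).congr fun p => ?_
  rw [rpow_neg (Nat.cast_nonneg _), rpow_two, div_eq_mul_inv]

theorem summable_inv_sub_primeDensity (H : NormCount N κ τ C) (hh : 2 ≤ h) :
    Summable fun p => (N p : ℝ)⁻¹ - primeDensity N h p :=
  H.summable_inv_sq.of_nonneg_of_le
    (fun p => sub_nonneg.2 (primeDensity_le_inv (H.two_le p) (by lia)))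
    fun p => inv_sub_primeDensity_le (H.two_le p) hh

theorem exists_abs_sum_primeDensity_mul_log_sub_log_le (H : NormCount N κ τ C) (hh : 2 ≤ h) :
    ∃ B, ∀ x : ℝ, 1 ≤ x →
      |∑ p ∈ normLE N x, primeDensity N h p * log (N p) - log x| ≤ B := by
  obtain ⟨B, hB⟩ := H.exists_abs_sum_log_div_sub_log_le
  refine ⟨B + ∑' p, log (N p) / (N p : ℝ) ^ 2, fun x hx => ?_⟩
  set R := ∑ p ∈ normLE N x, ((N p : ℝ)⁻¹ - primeDensity N h p) * log (N p)
  have hR : ∑ p ∈ normLE N x, primeDensity N h p * log (N p)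
      = ∑ p ∈ normLE N x, log (N p) / N p - R := by
    rw [← sum_sub_distrib]
    exact sum_congr rfl fun p _ => by ring
  have hR0 : 0 ≤ R := sum_nonneg fun p _ => mul_nonneg
    (sub_nonneg.2 (primeDensity_le_inv (H.two_le p) (by lia))) (H.log_norm_nonneg p)
  have hR1 : R ≤ ∑' p, log (N p) / (N p : ℝ) ^ 2 := by
    refine (sum_le_sum fun p _ => ?_).trans (H.summable_log_div_sq.sum_le_tsum (normLE N x)
      fun p _ => div_nonneg (H.log_norm_nonneg p) (by positivity))
    rw [div_eq_mul_one_div, mul_comm]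
    exact mul_le_mul_of_nonneg_left (inv_sub_primeDensity_le (H.two_le p) hh)
      (H.log_norm_nonneg p)
  have hbound := abs_le.1 (hB x hx)
  rw [hR, abs_le]
  constructor <;> linarith [hbound.1, hbound.2]

theorem tendsto_sum_primeDensity_sub_log_log (H : NormCount N κ τ C) (hh : 2 ≤ h)
    (hA : IsMertens N A) :
    Tendsto (fun x => ∑ p ∈ normLE N x, primeDensity N h p - log (log x)) atTop
      (𝓝 (C1const N h A)) := by
  have hf := H.linearGrowth_prime.tendsto
  have hdiff := (H.summable_inv_sub_primeDensity hh).hasSum.comp (tendsto_normLE_atTop hf)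
  have hlim : A - ∑' p, ((N p : ℝ)⁻¹ - primeDensity N h p) = C1const N h A := by
    simp only [C1const, fun p => inv_sub_primeDensity_eq_div (H.two_le p) (show h ≠ 0 by lia)]
  refine (hlim ▸ Tendsto.sub hA hdiff).congr fun x => ?_
  rw [← coe_normLE hf, finsum_mem_coe_finset, Function.comp_apply, sum_sub_distrib]
  simp only [one_div]
  ring

theorem exists_mertensWeight (H : NormCount N κ τ C) (hh : 2 ≤ h) (hA : IsMertens N A) :
    ∃ B, MertensWeight (normFiberSum N (primeDensity N h)) B (C1const N h A) := by
  have hf := H.linearGrowth_prime.tendsto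
  obtain ⟨B, hB⟩ := H.exists_abs_sum_primeDensity_mul_log_sub_log_le hh
  refine ⟨B, fun n => normFiberSum_nonneg (fun p => primeDensity_nonneg (H.one_le p) h) n,
    normFiberSum_eq_zero (fun p => ?_) _, normFiberSum_eq_zero (fun p => ?_) _,
    fun t ht => ?_, ?_⟩
  · have := H.two_le p
    lia
  · have := H.two_le p
    lia
  · rw [← sum_normLE_mul hf H.one_le _ log]
    exact hB t ht
  · simpa only [sum_normFiberSum hf H.one_le] using H.tendsto_sum_primeDensity_sub_log_log hh hA

end NormCount

end PrimeDensity

section SecondMoment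

open Real Finset

variable {P : Type*} {N : P → ℕ} {κ τ C B M x : ℝ} {h : ℕ} {p q : P}

theorem countLE_and_eq_sum_filter (N : P → ℕ) (R S : (P →₀ ℕ) → Prop) (x : ℝ) :
    countLE N (fun m => R m ∧ S m) x
      = ∑ m ∈ normLE (Nm N) x with R m, if S m then (1 : ℝ) else 0 := by
  rw [countLE_eq_sum, sum_filter]
  refine sum_congr rfl fun m _ => ?_
  by_cases hR : R m <;> by_cases hS : S m <;> simp [hR, hS]

theorem single_one_add_single_one_le {m : P →₀ ℕ} (hpq : p ≠ q) (hp : 1 ≤ m p) (hq : 1 ≤ m q) :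
    Finsupp.single p 1 + Finsupp.single q 1 ≤ m := by
  intro r
  by_cases hrp : r = p
  · subst hrp
    simpa [Finsupp.single_eq_of_ne hpq] using hp
  · by_cases hrq : r = q
    · subst hrq
      simpa [Finsupp.single_eq_of_ne hrp] using hq
    · simp [Finsupp.single_eq_of_ne hrp, Finsupp.single_eq_of_ne hrq]

theorem rpow_mul_rpow_one_sub (hx : 0 < x) (τ : ℝ) : x ^ τ * x ^ (1 - τ) = x := by
  rw [← rpow_add hx, add_sub_cancel, rpow_one]

theorem isBigO_sqrt_rpow_neg_half :
    (fun x : ℝ => √x ^ (-(1 / 2) : ℝ)) =O[atTop] fun x => log (log x) / log x := by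
  have hlog : (fun x : ℝ => (x ^ (1 / 4 : ℝ))⁻¹) =O[atTop] fun x => (log x)⁻¹ := by
    refine (isLittleO_log_rpow_atTop (by norm_num)).isBigO.inv_rev ?_
    filter_upwards [eventually_gt_atTop 1] with x hx hzero
    exact absurd hzero (log_pos hx).ne'
  refine ((isBigO_const_log_log 1).mul hlog).congr' ?_ (.of_eq (funext fun x => rfl))
  filter_upwards [eventually_ge_atTop 0] with x hx
  rw [one_mul, sqrt_eq_rpow, ← rpow_mul hx, ← rpow_neg hx]
  norm_num

namespace NormCount

theorem natCast_omegaM_eq_sum (H : NormCount N κ τ C) {m : P →₀ ℕ} (hm : m ∈ normLE (Nm N) x) :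
    (omegaM m : ℝ) = ∑ p ∈ normLE N x, if 1 ≤ m p then (1 : ℝ) else 0 := by
  rw [sum_boole, omegaM]
  congr 2
  ext p
  rw [Finsupp.mem_support_iff, mem_filter, mem_normLE H.linearGrowth_prime.tendsto,
    Nat.one_le_iff_ne_zero]
  refine (and_iff_right_of_imp fun hp => ?_).symm
  exact (Nat.cast_le.2 (le_Nm_of_ne_zero H.one_le hp)).trans ((mem_normLE H.tendsto).1 hm)

theorem finsum_omegaM_sq (H : NormCount N κ τ C) (R : (P →₀ ℕ) → Prop) (x : ℝ) :
    ∑ᶠ m ∈ {m : P →₀ ℕ | R m ∧ (Nm N m : ℝ) ≤ x}, (omegaM m : ℝ) ^ 2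
      = ∑ p ∈ normLE N x, countLE N (fun m => R m ∧ 1 ≤ m p) x
        + ∑ p ∈ normLE N x, ∑ q ∈ (normLE N x).erase p,
            countLE N (fun m => R m ∧ 1 ≤ m p ∧ 1 ≤ m q) x := by
  have hset : {m : P →₀ ℕ | R m ∧ (Nm N m : ℝ) ≤ x} = ({m ∈ normLE (Nm N) x | R m} : Finset _) := by
    ext m
    simp [mem_normLE H.tendsto, and_comm]
  rw [hset, finsum_mem_coe_finset]
  simp only [countLE_and_eq_sum_filter]
  rw [sum_comm, sum_congr rfl fun p _ => sum_comm, sum_comm (s := normLE N x), ← sum_add_distrib]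
  refine sum_congr rfl fun m hm => ?_
  rw [H.natCast_omegaM_eq_sum (mem_filter.1 hm).1, sq, sum_mul_sum, ← sum_add_distrib]
  refine sum_congr rfl fun p hp => ?_
  rw [← add_sum_erase _ _ hp]
  congr 1
  · split_ifs <;> simp
  · refine sum_congr rfl fun q _ => ?_
    by_cases hmp : 1 ≤ m p <;> by_cases hmq : 1 ≤ m q <;> simp [hmp, hmq]

theorem countLE_and_prime_and_prime_eq_zero (H : NormCount N κ τ C) (R : (P →₀ ℕ) → Prop)
    (hpq : p ≠ q) (hx : x / N p < N q) :
    countLE N (fun m => R m ∧ 1 ≤ m p ∧ 1 ≤ m q) x = 0 := by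
  rw [countLE_eq_sum]
  refine sum_eq_zero fun m hm => if_neg ?_
  rintro ⟨-, hmp, hmq⟩
  have hle := Nm_mono H.one_le (single_one_add_single_one_le hpq hmp hmq)
  rw [Nm_add, Nm_single, Nm_single, pow_one, pow_one] at hle
  have hprod : (N p : ℝ) * N q ≤ x :=
    (mod_cast hle : (N p : ℝ) * N q ≤ Nm N m).trans ((mem_normLE H.tendsto).1 hm)
  rw [div_lt_iff₀' (zero_lt_two.trans_le (H.two_le_cast p))] at hx
  exact hx.not_ge hprod

theorem sum_countLE_and_prime_and_prime (H : NormCount N κ τ C) (R : (P →₀ ℕ) → Prop)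
    (hx : 0 < x) :
    ∑ p ∈ normLE N x, ∑ q ∈ (normLE N x).erase p, countLE N (fun m => R m ∧ 1 ≤ m p ∧ 1 ≤ m q) x
      = ∑ p ∈ normLE N (x / 2), ∑ q ∈ (normLE N (x / N p)).erase p,
          countLE N (fun m => R m ∧ 1 ≤ m p ∧ 1 ≤ m q) x := by
  have hf := H.linearGrowth_prime.tendsto
  have hinner (p : P) : normLE N (x / N p) ⊆ normLE N x :=
    monotone_normLE hf (div_le_self hx.le (by linarith [H.two_le_cast p]))
  have houter : normLE N (x / 2) ⊆ normLE N x := monotone_normLE hf (by linarith)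
  have hvanish : ∀ p, ∀ q ∈ (normLE N x).erase p, q ∉ (normLE N (x / N p)).erase p →
      countLE N (fun m => R m ∧ 1 ≤ m p ∧ 1 ≤ m q) x = 0 := fun p q hq hq' => by
    refine H.countLE_and_prime_and_prime_eq_zero R (ne_of_mem_erase hq).symm ?_
    exact not_le.1 fun hle => hq' (mem_erase.2 ⟨ne_of_mem_erase hq, (mem_normLE hf).2 hle⟩)
  rw [sum_congr rfl fun p _ => (sum_subset (erase_subset_erase p (hinner p)) (hvanish p)).symm]
  refine (sum_subset houter fun p _ hp => ?_).symm
  rw [mem_normLE hf, not_le] at hp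
  have hp0 := zero_lt_two.trans_le (H.two_le_cast p)
  have hempty : normLE N (x / N p) = ∅ := eq_empty_of_forall_notMem fun q hq => by
    rw [mem_normLE hf, le_div_iff₀ hp0] at hq
    nlinarith [H.two_le_cast q]
  rw [hempty, erase_empty, sum_empty]

theorem rpow_neg_le_primeDensity_mul (H : NormCount N κ τ C) (hh : 2 ≤ h) (p : P) :
    (N p : ℝ) ^ (-τ) ≤ 2 * (primeDensity N h p * (N p : ℝ) ^ (1 - τ)) := by
  have hp0 := zero_lt_two.trans_le (H.two_le_cast p)
  calc (N p : ℝ) ^ (-τ) = (N p : ℝ)⁻¹ * (N p : ℝ) ^ (1 - τ) := by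
        rw [← rpow_neg_one, ← rpow_add hp0]
        congr 1
        ring
    _ ≤ 2 * primeDensity N h p * (N p : ℝ) ^ (1 - τ) := by
        gcongr
        exact inv_le_two_mul_primeDensity (H.two_le p) hh
    _ = 2 * (primeDensity N h p * (N p : ℝ) ^ (1 - τ)) := mul_assoc _ _ _

theorem sum_div_rpow_le (H : NormCount N κ τ C) (hh : 2 ≤ h) (hx : 0 < x) :
    ∑ p ∈ normLE N x, (x / N p) ^ τ
      ≤ 2 * x ^ τ * ∑ n ∈ Icc 0 ⌊x⌋₊,
          normFiberSum N (primeDensity N h) n * (n : ℝ) ^ (1 - τ) := by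
  rw [← sum_normLE_mul H.linearGrowth_prime.tendsto H.one_le _ (· ^ (1 - τ)), mul_sum]
  refine sum_le_sum fun p _ => ?_
  calc (x / N p) ^ τ = x ^ τ * (N p : ℝ) ^ (-τ) := by
        rw [div_rpow hx.le (Nat.cast_nonneg _), rpow_neg (Nat.cast_nonneg _), div_eq_mul_inv]
    _ ≤ x ^ τ * (2 * (primeDensity N h p * (N p : ℝ) ^ (1 - τ))) := by
        gcongr
        exact H.rpow_neg_le_primeDensity_mul hh p
    _ = 2 * x ^ τ * (primeDensity N h p * (N p : ℝ) ^ (1 - τ)) := by ring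

theorem sum_sum_div_rpow_le (H : NormCount N κ τ C) (hh : 2 ≤ h) (hx : 0 < x) :
    ∑ p ∈ normLE N (x / 2), ∑ q ∈ (normLE N (x / N p)).erase p, (x / (N p * N q)) ^ τ
      ≤ 4 * x ^ τ * ∑ n ∈ Icc 0 ⌊x / 2⌋₊,
          normFiberSum N (primeDensity N h) n * (n : ℝ) ^ (1 - τ) *
            ∑ m ∈ Icc 0 ⌊x / n⌋₊, normFiberSum N (primeDensity N h) m * (m : ℝ) ^ (1 - τ) := by
  set S := fun y : ℝ =>
    ∑ m ∈ Icc 0 ⌊y⌋₊, normFiberSum N (primeDensity N h) m * (m : ℝ) ^ (1 - τ)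
  have houter := sum_normLE_mul H.linearGrowth_prime.tendsto H.one_le (primeDensity N h)
    (fun n => n ^ (1 - τ) * S (x / n)) (x / 2)
  simp only [← mul_assoc] at houter
  rw [← houter, mul_sum]
  refine sum_le_sum fun p _ => ?_
  have hp0 := zero_lt_two.trans_le (H.two_le_cast p)
  calc ∑ q ∈ (normLE N (x / N p)).erase p, (x / (N p * N q)) ^ τ
      ≤ ∑ q ∈ normLE N (x / N p), (x / N p / N q) ^ τ := by
        simp only [div_div]
        exact sum_le_sum_of_subset_of_nonneg (erase_subset _ _) fun q _ _ => by positivity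
    _ ≤ 2 * (x / N p) ^ τ * S (x / N p) := H.sum_div_rpow_le hh (by positivity)
    _ = 2 * x ^ τ * (N p : ℝ) ^ (-τ) * S (x / N p) := by
        rw [div_rpow hx.le hp0.le, rpow_neg hp0.le]
        ring
    _ ≤ 2 * x ^ τ * (2 * (primeDensity N h p * (N p : ℝ) ^ (1 - τ))) * S (x / N p) := by
        have hS : 0 ≤ S (x / N p) := sum_nonneg fun m _ => mul_nonneg
          (normFiberSum_nonneg (fun p => primeDensity_nonneg (H.one_le p) h) m) (by positivity)
        gcongr
        exact H.rpow_neg_le_primeDensity_mul hh p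
    _ = 4 * x ^ τ * (primeDensity N h p * (N p : ℝ) ^ (1 - τ) * S (x / N p)) := by ring

theorem isBigO_sum_div_rpow (H : NormCount N κ τ C) (hh : 2 ≤ h)
    (hb : MertensWeight (normFiberSum N (primeDensity N h)) B M) :
    (fun x => ∑ p ∈ normLE N x, (x / N p) ^ τ) =O[atTop]
      fun x => x * (log (log x) / log x) := by
  obtain ⟨K, hK⟩ := hb.exists_sum_mul_rpow_le (sub_pos.2 H.lt_one)
  have hone : (fun x : ℝ => x * (1 / log x)) =O[atTop] fun x => x * (log (log x) / log x) :=
    (isBigO_refl _ _).mul ((isBigO_const_log_log 1).mul (isBigO_refl _ _))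
  refine .trans (.of_bound (2 * K) ?_) hone
  filter_upwards [eventually_ge_atTop 2] with x hx
  have hx0 : 0 < x := by linarith
  have hlog : 0 < log x := log_pos (by linarith)
  rw [norm_of_nonneg (sum_nonneg fun p _ => by positivity), norm_of_nonneg (by positivity)]
  calc ∑ p ∈ normLE N x, (x / N p) ^ τ ≤ 2 * x ^ τ * (K * (x ^ (1 - τ) / log x)) :=
        (H.sum_div_rpow_le hh hx0).trans (by gcongr; exact hK x hx)
    _ = 2 * K * (x ^ τ * x ^ (1 - τ) * (1 / log x)) := by ring
    _ = 2 * K * (x * (1 / log x)) := by rw [rpow_mul_rpow_one_sub hx0]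

theorem isBigO_sum_sum_div_rpow (H : NormCount N κ τ C) (hh : 2 ≤ h)
    (hb : MertensWeight (normFiberSum N (primeDensity N h)) B M) :
    (fun x => ∑ p ∈ normLE N (x / 2), ∑ q ∈ (normLE N (x / N p)).erase p, (x / (N p * N q)) ^ τ)
      =O[atTop] fun x => x * (log (log x) / log x) := by
  have hdouble := (isBigO_refl (fun x : ℝ => 4 * x ^ τ) atTop).mul
    (hb.isBigO_sum_mul_rpow_mul_sum_mul_rpow (sub_pos.2 H.lt_one))
  refine (IsBigO.trans (.of_bound 1 ?_) hdouble).trans (.of_bound 4 ?_)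
  · filter_upwards [eventually_gt_atTop 0] with x hx
    rw [norm_of_nonneg (sum_nonneg fun p _ => sum_nonneg fun q _ => by positivity), one_mul]
    exact (H.sum_sum_div_rpow_le hh hx).trans (le_norm_self _)
  · filter_upwards [eventually_gt_atTop 0] with x hx
    rw [← mul_assoc, mul_assoc 4, rpow_mul_rpow_one_sub hx, mul_assoc 4, norm_mul 4,
      norm_of_nonneg zero_le_four]

theorem isBigO_sum_countLE_prime_sub (H : NormCount N κ τ C) (hh : 2 ≤ h)
    (hb : MertensWeight (normFiberSum N (primeDensity N h)) B M) :
    (fun x => ∑ p ∈ normLE N x, countLE N (fun m => HFree h m ∧ 1 ≤ m p) x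
        - κ / zetaM N h * x * ∑ p ∈ normLE N x, primeDensity N h p) =O[atTop]
      fun x => x * (log (log x) / log x) := by
  obtain ⟨D, hD⟩ := H.exists_abs_countLE_hFree_and_prime_sub_le hh
  refine .trans (.of_bound D ?_) (H.isBigO_sum_div_rpow hh hb)
  filter_upwards [eventually_gt_atTop 0] with x hx
  have herr : 0 ≤ ∑ p ∈ normLE N x, (x / N p) ^ τ := sum_nonneg fun p _ => by positivity
  rw [norm_of_nonneg herr, mul_sum, mul_sum, ← sum_sub_distrib]
  refine norm_sum_le_of_le _ fun p _ => ?_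
  rw [mul_right_comm]
  exact hD p x hx

theorem isBigO_sum_sum_countLE_prime_sub (H : NormCount N κ τ C) (hh : 2 ≤ h)
    (hb : MertensWeight (normFiberSum N (primeDensity N h)) B M) :
    (fun x => ∑ p ∈ normLE N (x / 2), ∑ q ∈ (normLE N (x / N p)).erase p,
          countLE N (fun m => HFree h m ∧ 1 ≤ m p ∧ 1 ≤ m q) x
        - κ / zetaM N h * x * ∑ p ∈ normLE N (x / 2), ∑ q ∈ (normLE N (x / N p)).erase p,
          primeDensity N h p * primeDensity N h q) =O[atTop]
      fun x => x * (log (log x) / log x) := by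
  obtain ⟨D, hD⟩ := H.exists_abs_countLE_hFree_and_prime_and_prime_sub_le hh
  refine .trans (.of_bound D ?_) (H.isBigO_sum_sum_div_rpow hh hb)
  filter_upwards [eventually_gt_atTop 0] with x hx
  have herr : 0 ≤ ∑ p ∈ normLE N (x / 2), ∑ q ∈ (normLE N (x / N p)).erase p,
      (x / (N p * N q)) ^ τ := sum_nonneg fun p _ => sum_nonneg fun q _ => by positivity
  rw [norm_of_nonneg herr]
  simp only [mul_sum, ← sum_sub_distrib]
  refine norm_sum_le_of_le _ fun p _ => norm_sum_le_of_le _ fun q hq => ?_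
  rw [mul_right_comm]
  exact hD p q (ne_of_mem_erase hq).symm x hx

theorem sum_primeDensity_mul_primeDensity (H : NormCount N κ τ C) (h : ℕ) (hx : 4 ≤ x) :
    ∑ p ∈ normLE N (x / 2), ∑ q ∈ (normLE N (x / N p)).erase p,
        primeDensity N h p * primeDensity N h q
      = ∑ n ∈ Icc 0 ⌊x / 2⌋₊, normFiberSum N (primeDensity N h) n *
          ∑ m ∈ Icc 0 ⌊x / n⌋₊, normFiberSum N (primeDensity N h) m
        - ∑ p ∈ normLE N √x, primeDensity N h p ^ 2 := by
  have hf := H.linearGrowth_prime.tendsto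
  have hdiag (p : P) : p ∈ normLE N (x / N p) ↔ (N p : ℝ) ≤ √x := by
    rw [mem_normLE hf, le_div_iff₀ (zero_lt_two.trans_le (H.two_le_cast p)), ← sq,
      le_sqrt (Nat.cast_nonneg _) (by linarith)]
  have hsqrt : √x ≤ x / 2 := sqrt_le_iff.2 ⟨by linarith, by nlinarith⟩
  have hsub : normLE N √x = {p ∈ normLE N (x / 2) | p ∈ normLE N (x / N p)} := by
    ext p
    rw [mem_filter, hdiag, mem_normLE hf, mem_normLE hf]
    exact ⟨fun hp => ⟨hp.trans hsqrt, hp⟩, And.right⟩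
  have houter := sum_normLE_mul hf H.one_le (primeDensity N h)
    (fun n => ∑ m ∈ Icc 0 ⌊x / n⌋₊, normFiberSum N (primeDensity N h) m) (x / 2)
  rw [← houter, hsub, sum_filter, ← sum_sub_distrib]
  refine sum_congr rfl fun p _ => ?_
  rw [sum_normFiberSum hf H.one_le, ← mul_sum]
  split_ifs with hp
  · rw [← add_sum_erase _ _ hp]
    ring
  · rw [erase_eq_of_notMem hp, sub_zero]

theorem isBigO_sum_primeDensity_sq_sub_tsum (H : NormCount N κ τ C) (hh : h ≠ 0) :
    (fun x => ∑ p ∈ normLE N √x, primeDensity N h p ^ 2 - ∑' p, primeDensity N h p ^ 2)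
      =O[atTop] fun x => log (log x) / log x := by
  have hsum : Summable fun p => |primeDensity N h p ^ 2| * (N p : ℝ) ^ (1 / 2 : ℝ) := by
    refine (H.linearGrowth_prime.summable_mul_rpow_neg (s := 3 / 2) (by norm_num)).of_nonneg_of_le
      (fun p => by positivity) fun p => ?_
    have hp0 := zero_lt_two.trans_le (H.two_le_cast p)
    calc |primeDensity N h p ^ 2| * (N p : ℝ) ^ (1 / 2 : ℝ)
        ≤ (N p : ℝ)⁻¹ ^ 2 * (N p : ℝ) ^ (1 / 2 : ℝ) := by
          rw [abs_of_nonneg (sq_nonneg _)]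
          gcongr
          · exact primeDensity_nonneg (H.one_le p) h
          · exact primeDensity_le_inv (H.two_le p) hh
      _ = (1 : P → ℝ) p * (N p : ℝ) ^ (-(3 / 2) : ℝ) := by
          rw [← rpow_neg_one, ← rpow_mul_natCast hp0.le, ← rpow_add hp0, Pi.one_apply, one_mul]
          norm_num
  have htail := fun y (hy : 0 < y) => abs_sum_normLE_sub_tsum_le H.linearGrowth_prime.tendsto
    H.one_le (s := 1 / 2) (by norm_num) hsum hy
  refine .trans (.of_bound (∑' p, |primeDensity N h p ^ 2| * (N p : ℝ) ^ (1 / 2 : ℝ)) ?_)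
    isBigO_sqrt_rpow_neg_half
  filter_upwards [eventually_gt_atTop 0] with x hx
  rw [norm_of_nonneg (rpow_nonneg (sqrt_nonneg x) _), mul_comm]
  exact htail √x (sqrt_pos.2 hx)

theorem isBigO_sum_primeDensity_add_sum_sub (H : NormCount N κ τ C) (hh : h ≠ 0)
    (hb : MertensWeight (normFiberSum N (primeDensity N h)) B M) :
    (fun x => ∑ p ∈ normLE N x, primeDensity N h p
        + ∑ p ∈ normLE N (x / 2), ∑ q ∈ (normLE N (x / N p)).erase p,
            primeDensity N h p * primeDensity N h q
        - (log (log x) + M + ((log (log x) + M) ^ 2 - π ^ 2 / 6) - ∑' p, primeDensity N h p ^ 2))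
      =O[atTop] fun x => log (log x) / log x := by
  have hsingle : (fun x => ∑ p ∈ normLE N x, primeDensity N h p - log (log x) - M) =O[atTop]
      fun x => log (log x) / log x := by
    refine .trans (.of_bound (2 * B) ?_) ((isBigO_const_log_log 1).mul (isBigO_refl _ _))
    filter_upwards [eventually_gt_atTop 1] with x hx
    rw [← sum_normFiberSum H.linearGrowth_prime.tendsto H.one_le, one_mul,
      norm_of_nonneg (inv_nonneg.2 (log_pos hx).le), ← div_eq_mul_inv]
    exact hb.abs_sum_sub_log_log_sub_le hx
  refine ((hsingle.add hb.isBigO_sum_mul_sum_sub).sub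
    (H.isBigO_sum_primeDensity_sq_sub_tsum hh)).congr' ?_ .rfl
  filter_upwards [eventually_ge_atTop 4] with x hx
  rw [H.sum_primeDensity_mul_primeDensity h hx]
  ring

end NormCount

theorem C2const_eq (N : P → ℕ) (h : ℕ) (A : ℝ) :
    C2const N h A
      = C1const N h A ^ 2 + C1const N h A - π ^ 2 / 6 - ∑' p, primeDensity N h p ^ 2 := by
  simp only [C2const, Bconst, primeDensity]
  ring

end SecondMoment

/-- Second moment of `ω` over `h`-free elements. -/
theorem second_moment_omega_hfree {P : Type*} [Countable P] (N : P → ℕ)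
    (hN : ∀ p, 2 ≤ N p) (κ θ : ℝ) (hstar : StarCond N κ θ)
    (A : ℝ) (hA : IsMertens N A) (h : ℕ) (hh : 2 ≤ h) :
    (fun x : ℝ =>
        (∑ᶠ m ∈ {m : P →₀ ℕ | HFree h m ∧ (Nm N m : ℝ) ≤ x}, (omegaM m : ℝ) ^ 2)
          - κ / zetaM N h * (x * Real.log (Real.log x) ^ 2)
          - κ * (2 * C1const N h A + 1) / zetaM N h * (x * Real.log (Real.log x))
          - κ * C2const N h A / zetaM N h * x)
      =O[atTop] fun x : ℝ => x * Real.log (Real.log x) / Real.log x := by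
  obtain ⟨τ, C, H⟩ := exists_normCount hN hstar
  obtain ⟨B, hb⟩ := H.exists_mertensWeight hh hA
  have hsingle := H.isBigO_sum_countLE_prime_sub hh hb
  have hpairs := H.isBigO_sum_sum_countLE_prime_sub hh hb
  have hmain := (isBigO_refl (fun x : ℝ => κ / zetaM N h * x) atTop).mul
    (H.isBigO_sum_primeDensity_add_sum_sub (by lia) hb)
  have hscale : (fun x : ℝ => κ / zetaM N h * x * (Real.log (Real.log x) / Real.log x))
      =O[atTop] fun x => x * (Real.log (Real.log x) / Real.log x) := by
    simp only [mul_assoc]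
    exact isBigO_const_mul_self _ _ _
  simp only [mul_div_assoc _ (Real.log (Real.log _))]
  refine ((hsingle.add hpairs).add (hmain.trans hscale)).congr'
    ((eventually_gt_atTop 0).mono fun x hx => ?_) .rfl
  beta_reduce
  rw [H.finsum_omegaM_sq, H.sum_countLE_and_prime_and_prime _ hx, C2const_eq]
  ring
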